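/- Let m ≥ 0 be an integer and let μ be a positive measure on the upper half-plane Π⁺. The following are equivalent: (1) there exists C > 0 such that ∫_{Π⁺} |(□^m F)(z₁, 0, 0)|² dμ(z₁) ≤ C ‖F‖²_{H²(T_{Λ₃})} for every F ∈ H²(T_{Λ₃}); (2) there exists C' > 0 such that ∫_{Π⁺} |G(z₁)|² dμ(z₁) ≤ C' ‖G‖²_{A²_{4m+1}(Π⁺)} for every G ∈ A²_{4m+1}(Π⁺). -/

import Mathlib

/-!
By Paley–Wiener, `F ∈ H²(T_{Λ₃})` is the Fourier–Laplace transform of some `f ∈ L²` supported in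
the dual cone, and `G ∈ A²_{4m+1}(Π⁺)` is that of some `g` on `(0, ∞)` with
`‖G‖² = ∫ |g(t)|² w(t) dt`, where `w(t)` is a multiple of `t^{-(4m+2)}`. The function
`z ↦ (□^m F)(z, 0, 0)` has amplitude `g(t) = ∫ (4π²Δ(t, η))^m f(t, η) dη`. The section of the cone
at height `t` has area of order `t²` and `Δ = O(t²)` on it, so Cauchy–Schwarz gives
`|g(t)|² ≤ C t^{4m+2} ∫ |f(t, η)|² dη`, which the weight `w` cancels exactly. Hence
`F ↦ (□^m F)(·, 0, 0)` is bounded from `H²(T_{Λ₃})` to `A²_{4m+1}(Π⁺)`. It has a bounded right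
inverse, obtained by spreading `g(t) / (4π²Δ)^m` evenly over the sections of a smaller cone, where
`Δ` is comparable to `t²`. So testing `μ` on either space is the same.
-/

open MeasureTheory Set
open scoped ENNReal NNReal

noncomputable section

/-- The Lorentz cone `Λ₃ = {y ∈ ℝ³ : y₁ + y₂ > 0, y₁² − y₂² − y₃² > 0}`. -/
def Lambda3 : Set (Fin 3 → ℝ) :=
  {y | 0 < y 0 + y 1 ∧ 0 < (y 0) ^ 2 - (y 1) ^ 2 - (y 2) ^ 2}

/-- The tube domain `T_{Λ₃} = ℝ³ + iΛ₃ ⊂ ℂ³`. -/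
def TLambda3 : Set (Fin 3 → ℂ) :=
  {z | (fun i => (z i).im) ∈ Lambda3}

/-- The determinant function of the Lorentz cone: `Δ(y) = y₁² − y₂² − y₃²`. -/
def DeltaL (y : Fin 3 → ℝ) : ℝ := (y 0) ^ 2 - (y 1) ^ 2 - (y 2) ^ 2

/-- Square of the Hardy space `H²(T_{Λ₃})` norm. -/
def hardyNormSq (F : (Fin 3 → ℂ) → ℂ) : ℝ≥0∞ :=
  ⨆ y ∈ Lambda3,
    ∫⁻ x : Fin 3 → ℝ, (‖F (fun i => (x i : ℂ) + (y i : ℂ) * Complex.I)‖₊ : ℝ≥0∞) ^ 2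

/-- Square of the weighted Bergman space `A²_ν(T_{Λ₃})` norm:
`‖G‖² = ∫_{Λ₃} ∫_{ℝ³} |G(x+iy)|² Δ(y)^{ν−3/2} dx dy`. -/
def bergNormSqTube (ν : ℝ) (G : (Fin 3 → ℂ) → ℂ) : ℝ≥0∞ :=
  ∫⁻ y in Lambda3,
    (∫⁻ x : Fin 3 → ℝ, (‖G (fun i => (x i : ℂ) + (y i : ℂ) * Complex.I)‖₊ : ℝ≥0∞) ^ 2)
      * ENNReal.ofReal (DeltaL y ^ (ν - 3 / 2))

/-- Partial derivative in the `i`-th complex coordinate. -/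
def pd (i : Fin 3) (F : (Fin 3 → ℂ) → ℂ) : (Fin 3 → ℂ) → ℂ :=
  fun z => fderiv ℂ F z (Pi.single i 1)

/-- The box operator `□ = −∂²/∂z₁² + ∂²/∂z₂² + ∂²/∂z₃²` associated to the Lorentz cone. -/
def Box (F : (Fin 3 → ℂ) → ℂ) : (Fin 3 → ℂ) → ℂ :=
  fun z => - pd 0 (pd 0 F) z + pd 1 (pd 1 F) z + pd 2 (pd 2 F) z


/-- The upper half-plane `Π⁺`. -/
def UHP : Set ℂ := {z : ℂ | 0 < z.im}

/-- The weighted measure `dV_α(x+iy) = y^α dx dy` on the upper half-plane. -/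
def Vm (α : ℝ) : Measure ℂ :=
  (volume.restrict UHP).withDensity fun z => ENNReal.ofReal (z.im ^ α)

/-- Square of the weighted Bergman space `A²_α(Π⁺)` norm:
`‖G‖² = ∫_{Π⁺} |G(x+iy)|² y^α dx dy`. -/
def bergNormSqUHP (α : ℝ) (G : ℂ → ℂ) : ℝ≥0∞ :=
  ∫⁻ z, (‖G z‖₊ : ℝ≥0∞) ^ 2 ∂(Vm α)

open scoped FourierTransform RealInnerProductSpace Topology
open Filter

section FourierTransform

variable {V : Type*} [NormedAddCommGroup V] [InnerProductSpace ℝ V] [FiniteDimensional ℝ V]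
  [MeasurableSpace V] [BorelSpace V]

theorem Lp_ae_eq_of_forall_integral_schwartz {u : Lp ℂ 2 (volume : Measure V)} {h : V → ℂ}
    (hh : LocallyIntegrable h) (huh : ∀ ψ : SchwartzMap V ℂ, ∫ x, ψ x • u x = ∫ x, ψ x • h x) :
    u =ᵐ[volume] h := by
  refine ae_eq_of_integral_contDiff_smul_eq ((Lp.memLp u).locallyIntegrable one_le_two) hh
    fun φ hφ hφc ↦ ?_
  have hφc' : HasCompactSupport fun ξ ↦ (φ ξ : ℂ) := hφc.comp_left (g := Complex.ofReal) rfl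
  exact huh (hφc'.toSchwartzMap (Complex.ofRealCLM.contDiff.comp hφ))

theorem integral_schwartz_smul_toLp {g : V → ℂ} (hg : MemLp g 2) (ψ : SchwartzMap V ℂ) :
    (hg.toLp g : TemperedDistribution V ℂ) ψ = ∫ x, ψ x • g x := by
  rw [Lp.toTemperedDistribution_apply]
  refine integral_congr_ae ?_
  filter_upwards [hg.coeFn_toLp] with x hx
  rw [hx]

theorem continuous_fourier {g : V → ℂ} (hg : Integrable g) : Continuous (𝓕 g) :=
  VectorFourier.fourierIntegral_continuous Real.continuous_fourierChar
    (by exact continuous_inner) hg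

theorem continuous_fourierInv {g : V → ℂ} (hg : Integrable g) : Continuous (𝓕⁻ g) := by
  rw [Real.fourierInv_eq_fourier_comp_neg]
  exact continuous_fourier hg.comp_neg

theorem integral_fourier_smul_eq {φ g : V → ℂ} (hφ : Integrable φ) (hg : Integrable g) :
    ∫ ξ, 𝓕 φ ξ • g ξ = ∫ x, φ x • 𝓕 g x := by
  simpa using! VectorFourier.integral_fourierIntegral_smul_eq_flip (L := innerₗ V)
    Real.continuous_fourierChar continuous_inner hφ hg

theorem integral_fourierInv_smul_eq {φ g : V → ℂ} (hφ : Integrable φ) (hg : Integrable g) :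
    ∫ ξ, 𝓕⁻ φ ξ • g ξ = ∫ x, φ x • 𝓕⁻ g x := by
  rw [Real.fourierInv_eq_fourier_comp_neg g, ← integral_fourier_smul_eq hφ hg.comp_neg,
    ← integral_neg_eq_self]
  simp only [Real.fourierInv_eq_fourier_neg, neg_neg]

theorem fourier_toLp_ae_eq {g : V → ℂ} (hg : Integrable g) (hg2 : MemLp g 2) :
    (𝓕 (hg2.toLp g) : Lp ℂ 2 (volume : Measure V)) =ᵐ[volume] 𝓕 g := by
  refine Lp_ae_eq_of_forall_integral_schwartz (continuous_fourier hg).locallyIntegrable fun ψ ↦ ?_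
  rw [← Lp.toTemperedDistribution_apply, ← Lp.fourier_toTemperedDistribution_eq,
    TemperedDistribution.fourier_apply, integral_schwartz_smul_toLp, SchwartzMap.fourier_coe,
    integral_fourier_smul_eq ψ.integrable hg]

theorem fourierInv_toLp_ae_eq {g : V → ℂ} (hg : Integrable g) (hg2 : MemLp g 2) :
    (𝓕⁻ (hg2.toLp g) : Lp ℂ 2 (volume : Measure V)) =ᵐ[volume] 𝓕⁻ g := by
  refine Lp_ae_eq_of_forall_integral_schwartz (continuous_fourierInv hg).locallyIntegrable
    fun ψ ↦ ?_
  rw [← Lp.toTemperedDistribution_apply, ← Lp.fourierInv_toTemperedDistribution_eq,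
    TemperedDistribution.fourierInv_apply, integral_schwartz_smul_toLp, SchwartzMap.fourierInv_coe,
    integral_fourierInv_smul_eq ψ.integrable hg]

theorem lintegral_enorm_sq_eq {α : Type*} [MeasurableSpace α] {μ : Measure α} (g : α → ℂ) :
    ∫⁻ x, ‖g x‖ₑ ^ 2 ∂μ = eLpNorm g 2 μ ^ 2 := by
  simpa using (eLpNorm_nnreal_pow_eq_lintegral (f := g) (μ := μ) (p := 2) two_ne_zero).symm

theorem memLp_two_iff_lintegral {α : Type*} [MeasurableSpace α] {μ : Measure α} {g : α → ℂ}
    (hg : AEStronglyMeasurable g μ) : MemLp g 2 μ ↔ ∫⁻ x, ‖g x‖ₑ ^ 2 ∂μ < ⊤ := by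
  rw [lintegral_enorm_sq_eq, ENNReal.pow_lt_top_iff]
  simp [MemLp, hg]

theorem lintegral_enorm_sq_fourier_toLp {g : V → ℂ} (hg : MemLp g 2) :
    ∫⁻ ξ, ‖(𝓕 (hg.toLp g) : Lp ℂ 2 (volume : Measure V)) ξ‖ₑ ^ 2 = ∫⁻ x, ‖g x‖ₑ ^ 2 := by
  rw [lintegral_enorm_sq_eq, lintegral_enorm_sq_eq, ← Lp.enorm_def, ← Lp.enorm_toLp hg,
    ← ofReal_norm, Lp.norm_fourier_eq, ofReal_norm]

theorem lintegral_enorm_sq_fourier_le {g : V → ℂ} (hg : Integrable g) :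
    ∫⁻ ξ, ‖𝓕 g ξ‖ₑ ^ 2 ≤ ∫⁻ x, ‖g x‖ₑ ^ 2 := by
  rcases eq_top_or_lt_top (∫⁻ x, ‖g x‖ₑ ^ 2) with h | h
  · exact h ▸ le_top
  · have hg2 := (memLp_two_iff_lintegral hg.1).2 h
    rw [← lintegral_enorm_sq_fourier_toLp hg2]
    refine (lintegral_congr_ae ?_).le
    filter_upwards [fourier_toLp_ae_eq hg hg2] with ξ hξ
    rw [hξ]

theorem lintegral_enorm_sq_fourierInv_le {g : V → ℂ} (hg : Integrable g) :
    ∫⁻ x, ‖𝓕⁻ g x‖ₑ ^ 2 ≤ ∫⁻ ξ, ‖g ξ‖ₑ ^ 2 := by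
  have hneg : ∀ x, 𝓕⁻ g x = 𝓕 g (-x) := Real.fourierInv_eq_fourier_neg g
  simp only [hneg]
  rw [lintegral_neg_eq_self fun x ↦ ‖𝓕 g x‖ₑ ^ 2]
  exact lintegral_enorm_sq_fourier_le hg

end FourierTransform

section Translation

variable {V : Type*} [NormedAddCommGroup V] [NormedSpace ℝ V] [FiniteDimensional ℝ V]
  [MeasureSpace V] [BorelSpace V] [(volume : Measure V).IsAddHaarMeasure] {g : V → ℂ}

theorem integrable_comp_add_smul (hg : Integrable g) (hc : Continuous g) (v : V) :
    Integrable (fun p : V × ℝ ↦ g (p.1 + p.2 • v))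
      (volume.prod (volume.restrict (Ioc 0 1))) := by
  have hmeas : AEStronglyMeasurable (fun p : V × ℝ ↦ g (p.1 + p.2 • v))
      (volume.prod (volume.restrict (Ioc 0 1))) :=
    Continuous.aestronglyMeasurable (by fun_prop)
  refine (integrable_prod_iff' hmeas).2 ⟨ae_of_all _ fun s ↦ hg.comp_add_right (s • v), ?_⟩
  simp only [integral_add_right_eq_self (fun x ↦ ‖g x‖), integrable_const]

theorem integrable_intervalIntegral_comp_add_smul (hg : Integrable g) (hc : Continuous g) (v : V) :
    Integrable fun x ↦ ∫ s in (0 : ℝ)..1, g (x + s • v) := by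
  simpa only [intervalIntegral.integral_of_le zero_le_one] using
    (integrable_comp_add_smul hg hc v).integral_prod_left

theorem integral_intervalIntegral_comp_add_smul (hg : Integrable g) (hc : Continuous g) (v : V) :
    ∫ x, ∫ s in (0 : ℝ)..1, g (x + s • v) = ∫ x, g x := by
  simp only [intervalIntegral.integral_of_le zero_le_one]
  rw [integral_integral_swap (integrable_comp_add_smul hg hc v)]
  simp [integral_add_right_eq_self g]

end Translation

section Tube

variable {V : Type*} [NormedAddCommGroup V] [InnerProductSpace ℝ V]

/-- `F x y` stands for `F (x + iy)`: a function on the tube `V + iΩ` over `Ω ⊆ V` that is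
continuous, and holomorphic on every complex line with a real direction `v`. -/
structure HolomorphicOnTube (Ω : Set V) (F : V → V → ℂ) : Prop where
  continuousOn : ContinuousOn (Function.uncurry F) (univ ×ˢ Ω)
  differentiableOn_line : ∀ x y v, DifferentiableOn ℂ
    (fun ζ : ℂ ↦ F (x + ζ.re • v) (y + ζ.im • v)) {ζ | y + ζ.im • v ∈ Ω}

theorem add_smul_sub_mem_of_segment_subset {Ω : Set V} {y y' : V} (hseg : segment ℝ y y' ⊆ Ω)
    {t : ℝ} (ht : t ∈ Icc 0 1) : y + t • (y' - y) ∈ Ω :=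
  hseg (segment_eq_image' ℝ y y' ▸ mem_image_of_mem _ ht)

namespace HolomorphicOnTube

variable {Ω : Set V} {F G : V → V → ℂ}

theorem continuous_left (hF : HolomorphicOnTube Ω F) {y : V} (hy : y ∈ Ω) :
    Continuous fun x ↦ F x y :=
  hF.continuousOn.comp_continuous (f := fun x ↦ (x, y)) (by fun_prop) fun _ ↦ ⟨trivial, hy⟩

theorem mul (hF : HolomorphicOnTube Ω F) (hG : HolomorphicOnTube Ω G) :
    HolomorphicOnTube Ω fun x y ↦ F x y * G x y where
  continuousOn := hF.continuousOn.mul hG.continuousOn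
  differentiableOn_line x y v := (hF.differentiableOn_line x y v).mul
    (hG.differentiableOn_line x y v)

theorem integral_boundary_rect (hF : HolomorphicOnTube Ω F) {y y' : V}
    (hseg : segment ℝ y y' ⊆ Ω) (x : V) :
    (∫ s in (0 : ℝ)..1, F (x + s • (y' - y)) y) - (∫ s in (0 : ℝ)..1, F (x + s • (y' - y)) y')
      + Complex.I • (∫ t in (0 : ℝ)..1, F (x + (y' - y)) (y + t • (y' - y)))
      - Complex.I • (∫ t in (0 : ℝ)..1, F x (y + t • (y' - y))) = 0 := by
  have hrect := Complex.integral_boundary_rect_eq_zero_of_differentiableOn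
    (fun ζ ↦ F (x + ζ.re • (y' - y)) (y + ζ.im • (y' - y))) 0 (1 + Complex.I)
    ((hF.differentiableOn_line x y (y' - y)).mono fun ζ hζ ↦
      add_smul_sub_mem_of_segment_subset hseg (by simpa using hζ.2))
  simpa using hrect

variable [FiniteDimensional ℝ V] [MeasurableSpace V] [BorelSpace V]

/-- Averaging Cauchy's theorem on the rectangle `[0, 1] × [0, 1]` in the direction `y' - y` over all
base points `x`: by translation invariance the two vertical sides contribute equally. -/
theorem integral_eq_of_segment_subset (hF : HolomorphicOnTube Ω F) {y y' : V}
    (hseg : segment ℝ y y' ⊆ Ω) (hy : Integrable fun x ↦ F x y) (hy' : Integrable fun x ↦ F x y')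
    (hint : Integrable (fun p : V × ℝ ↦ F p.1 (y + p.2 • (y' - y)))
      (volume.prod (volume.restrict (Ioc 0 1)))) :
    ∫ x, F x y = ∫ x, F x y' := by
  set v := y' - y
  have side_integrable : Integrable fun x ↦ ∫ t in (0 : ℝ)..1, F x (y + t • v) := by
    simpa only [intervalIntegral.integral_of_le zero_le_one] using hint.integral_prod_left
  have hcont := hF.continuous_left (hseg (left_mem_segment ℝ y y'))
  have hcont' := hF.continuous_left (hseg (right_mem_segment ℝ y y'))
  let A w x := ∫ s in (0 : ℝ)..1, F (x + s • v) w
  let S x := ∫ t in (0 : ℝ)..1, F x (y + t • v)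
  have hrect : (fun x ↦ A y x - A y' x) = fun x ↦ Complex.I • S x - Complex.I • S (x + v) := by
    ext x
    linear_combination (exp := 1) hF.integral_boundary_rect hseg x
  have hS : Integrable fun x ↦ Complex.I • S x := side_integrable.smul Complex.I
  rw [← sub_eq_zero, ← integral_intervalIntegral_comp_add_smul hy hcont v,
    ← integral_intervalIntegral_comp_add_smul hy' hcont' v,
    ← integral_sub (integrable_intervalIntegral_comp_add_smul hy hcont v)
      (integrable_intervalIntegral_comp_add_smul hy' hcont' v)]
  calc ∫ x, (A y x - A y' x)
      = ∫ x, (Complex.I • S x - Complex.I • S (x + v)) := congrArg _ hrect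
    _ = 0 := by
      rw [integral_sub hS (hS.comp_add_right v),
        integral_add_right_eq_self (fun x ↦ Complex.I • S x) v, sub_self]

end HolomorphicOnTube

end Tube

section Gaussian

variable {V : Type*} [NormedAddCommGroup V] [InnerProductSpace ℝ V]

/-- The complex-bilinear extension `⟨x + iy, ξ⟩` of the inner product to `V + iV`. -/
def complexInner (x y ξ : V) : ℂ := ⟪x, ξ⟫ + Complex.I * ⟪y, ξ⟫

/-- The bilinear square `⟨x + iy, x + iy⟩`, whose real part is `‖x‖² - ‖y‖²`. -/
def complexSq (x y : V) : ℂ := ‖x‖ ^ 2 - ‖y‖ ^ 2 + 2 * Complex.I * ⟪x, y⟫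

theorem complexInner_add_smul (x y v ξ : V) (ζ : ℂ) :
    complexInner (x + ζ.re • v) (y + ζ.im • v) ξ = complexInner x y ξ + ζ * ⟪v, ξ⟫ := by
  simp only [complexInner, inner_add_left, real_inner_smul_left, Complex.ofReal_add,
    Complex.ofReal_mul]
  linear_combination (⟪v, ξ⟫ : ℂ) * Complex.re_add_im ζ

theorem complexSq_add_smul (x y v : V) (ζ : ℂ) :
    complexSq (x + ζ.re • v) (y + ζ.im • v)
      = complexSq x y + 2 * ζ * complexInner x y v + ζ ^ 2 * ‖v‖ ^ 2 := by
  have hv (w : V) (a : ℝ) : (‖w + a • v‖ ^ 2 : ℂ) = ‖w‖ ^ 2 + 2 * a * ⟪w, v⟫ + a ^ 2 * ‖v‖ ^ 2 := by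
    have := norm_add_sq_real w (a • v)
    rw [real_inner_smul_right, norm_smul, mul_pow, Real.norm_eq_abs, sq_abs] at this
    exact_mod_cast this.trans (by ring)
  simp only [complexSq, complexInner, hv, inner_add_left, inner_add_right, real_inner_smul_left,
    real_inner_smul_right, real_inner_self_eq_norm_sq, real_inner_comm v y, Complex.ofReal_add,
    Complex.ofReal_mul, Complex.ofReal_pow]
  conv_rhs => rw [← Complex.re_add_im ζ]
  ring_nf
  simp only [Complex.I_sq]
  ring

/-- The entire function `exp (-ε ⟨z, z⟩ - 2πi ⟨z, ξ⟩)` of `z = x + iy`: the character of frequency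
`ξ`, regularised so as to decay in the real directions. -/
def gaussianCharacter (ε : ℝ) (ξ x y : V) : ℂ :=
  Complex.exp (-ε * complexSq x y) * Complex.exp (-2 * Real.pi * Complex.I * complexInner x y ξ)

theorem holomorphicOnTube_gaussianCharacter (ε : ℝ) (ξ : V) (Ω : Set V) :
    HolomorphicOnTube Ω (gaussianCharacter ε ξ) where
  continuousOn := by
    refine Continuous.continuousOn ?_
    simp only [Function.uncurry_def, gaussianCharacter, complexSq, complexInner]
    fun_prop
  differentiableOn_line x y v := by
    simp only [gaussianCharacter, complexSq_add_smul, complexInner_add_smul]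
    fun_prop

theorem norm_gaussianCharacter (ε : ℝ) (ξ x y : V) : ‖gaussianCharacter ε ξ x y‖
    = Real.exp (-ε * ‖x‖ ^ 2) * Real.exp (ε * ‖y‖ ^ 2 + 2 * Real.pi * ⟪y, ξ⟫) := by
  have hre : (-ε * complexSq x y).re = -ε * (‖x‖ ^ 2 - ‖y‖ ^ 2) := by
    simp [complexSq, pow_two]
  have hre' : (-2 * Real.pi * Complex.I * complexInner x y ξ).re = 2 * Real.pi * ⟪y, ξ⟫ := by
    simp [complexInner]
  rw [gaussianCharacter, norm_mul, Complex.norm_exp, Complex.norm_exp, hre, hre', ← Real.exp_add,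
    ← Real.exp_add]
  ring_nf

end Gaussian

section GaussianIntegrability

variable {V : Type*} [NormedAddCommGroup V] [InnerProductSpace ℝ V] [FiniteDimensional ℝ V]
  [MeasurableSpace V] [BorelSpace V]

theorem integrable_exp_neg_mul_sq_norm {ε : ℝ} (hε : 0 < ε) :
    Integrable fun x : V ↦ Real.exp (-ε * ‖x‖ ^ 2) ^ 2 := by
  have h := (GaussianFourier.integrable_cexp_neg_mul_sq_norm_add (V := V) (b := (2 * ε : ℝ))
    (by simpa using hε) 0 0).norm
  refine h.congr (ae_of_all _ fun x ↦ ?_)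
  have hre : (-((2 * ε : ℝ) : ℂ) * ‖x‖ ^ 2).re = -(2 * ε) * ‖x‖ ^ 2 := by
    norm_cast
  simp only [Complex.norm_exp, zero_mul, add_zero, hre, ← Real.exp_nat_mul]
  push_cast
  ring_nf

theorem memLp_gaussianCharacter {ε : ℝ} (hε : 0 < ε) (ξ y : V) :
    MemLp (fun x ↦ gaussianCharacter ε ξ x y) 2 := by
  have hcont : Continuous fun x ↦ gaussianCharacter ε ξ x y :=
    (holomorphicOnTube_gaussianCharacter ε ξ univ).continuous_left trivial
  rw [memLp_two_iff_integrable_sq_norm hcont.aestronglyMeasurable]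
  simp only [norm_gaussianCharacter, mul_pow]
  exact (integrable_exp_neg_mul_sq_norm hε).mul_const _

theorem memLp_gaussianCharacter_segment {ε : ℝ} (hε : 0 < ε) (ξ y v : V) :
    MemLp (fun p : V × ℝ ↦ gaussianCharacter ε ξ p.1 (y + p.2 • v)) 2
      (volume.prod (volume.restrict (Ioc 0 1))) := by
  have hcont : Continuous fun p : V × ℝ ↦ gaussianCharacter ε ξ p.1 (y + p.2 • v) :=
    (holomorphicOnTube_gaussianCharacter ε ξ univ).continuousOn.comp_continuous
      (f := fun p : V × ℝ ↦ (p.1, y + p.2 • v)) (by fun_prop) fun _ ↦ ⟨trivial, trivial⟩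
  rw [memLp_two_iff_integrable_sq_norm hcont.aestronglyMeasurable]
  simp only [norm_gaussianCharacter, mul_pow]
  refine (integrable_exp_neg_mul_sq_norm hε).mul_prod (g := fun t : ℝ ↦
    Real.exp (ε * ‖y + t • v‖ ^ 2 + 2 * Real.pi * ⟪y + t • v, ξ⟫) ^ 2) ?_
  exact (Continuous.integrableOn_Icc (by fun_prop)).mono_set Ioc_subset_Icc_self

theorem integral_mul_gaussianCharacter (g : V → ℂ) (ε : ℝ) (ξ y : V) :
    ∫ x, g x * gaussianCharacter ε ξ x y
      = Real.exp (2 * Real.pi * ⟪y, ξ⟫) * 𝓕 (fun x ↦ g x * gaussianCharacter ε 0 x y) ξ := by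
  rw [Real.fourier_eq', ← integral_const_mul]
  refine integral_congr_ae (ae_of_all _ fun x ↦ ?_)
  simp only [gaussianCharacter, complexInner, inner_zero_right, Complex.ofReal_zero, mul_zero,
    add_zero, Complex.exp_zero, mul_one, smul_eq_mul, Complex.ofReal_exp]
  have hexp : Complex.exp (-2 * Real.pi * Complex.I * (⟪x, ξ⟫ + Complex.I * ⟪y, ξ⟫))
      = Complex.exp (2 * Real.pi * ⟪y, ξ⟫ : ℝ) * Complex.exp ((-2 * Real.pi * ⟪x, ξ⟫ : ℝ) *
        Complex.I) := by
    rw [← Complex.exp_add]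
    congr 1
    push_cast
    linear_combination (-2 * Real.pi * ⟪y, ξ⟫ : ℂ) * Complex.I_sq
  rw [hexp]
  ring

variable {Ω : Set V} {F : V → V → ℂ}

theorem HolomorphicOnTube.fourier_mul_gaussian_eq (hF : HolomorphicOnTube Ω F) {y y' : V}
    (hseg : segment ℝ y y' ⊆ Ω) (hy : MemLp (fun x ↦ F x y) 2) (hy' : MemLp (fun x ↦ F x y') 2)
    (hfin : ∫⁻ t in Ioc (0 : ℝ) 1, ∫⁻ x, ‖F x (y + t • (y' - y))‖ₑ ^ 2 < ⊤)
    {ε : ℝ} (hε : 0 < ε) (ξ : V) :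
    Real.exp (2 * Real.pi * ⟪y, ξ⟫) * 𝓕 (fun x ↦ F x y * gaussianCharacter ε 0 x y) ξ
      = Real.exp (2 * Real.pi * ⟪y', ξ⟫) * 𝓕 (fun x ↦ F x y' * gaussianCharacter ε 0 x y') ξ := by
  rw [← integral_mul_gaussianCharacter, ← integral_mul_gaussianCharacter]
  have hmeas : AEStronglyMeasurable (fun p : V × ℝ ↦ F p.1 (y + p.2 • (y' - y)))
      (volume.prod (volume.restrict (Ioc 0 1))) := by
    rw [← Measure.restrict_univ (μ := (volume : Measure V)), Measure.prod_restrict]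
    refine ContinuousOn.aestronglyMeasurable ?_ (MeasurableSet.univ.prod measurableSet_Ioc)
    refine hF.continuousOn.comp (f := fun p : V × ℝ ↦ (p.1, y + p.2 • (y' - y)))
      (by fun_prop) fun p hp ↦ ?_
    exact ⟨trivial, add_smul_sub_mem_of_segment_subset hseg (Ioc_subset_Icc_self hp.2)⟩
  have hstrip : MemLp (fun p : V × ℝ ↦ F p.1 (y + p.2 • (y' - y))) 2
      (volume.prod (volume.restrict (Ioc 0 1))) := by
    rwa [memLp_two_iff_lintegral hmeas, lintegral_prod_symm _ (hmeas.enorm.pow_const 2)]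
  exact (hF.mul (holomorphicOnTube_gaussianCharacter ε ξ Ω)).integral_eq_of_segment_subset hseg
    (hy.integrable_mul (memLp_gaussianCharacter hε ξ y))
    (hy'.integrable_mul (memLp_gaussianCharacter hε ξ y'))
    (hstrip.integrable_mul (memLp_gaussianCharacter_segment hε ξ y (y' - y)))

end GaussianIntegrability

section Amplitude

theorem ae_mul_eq_mul_of_tendsto {α : Type*} [MeasurableSpace α] {μ : Measure α}
    {u v : ℕ → Lp ℂ 2 μ} {u₀ v₀ : Lp ℂ 2 μ} (hu : Tendsto u atTop (𝓝 u₀))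
    (hv : Tendsto v atTop (𝓝 v₀)) {k l : α → ℂ}
    (h : ∀ n, ∀ᵐ x ∂μ, k x * u n x = l x * v n x) : ∀ᵐ x ∂μ, k x * u₀ x = l x * v₀ x := by
  obtain ⟨ns, hns, hu_ae⟩ := (tendstoInMeasure_of_tendsto_Lp hu).exists_seq_tendsto_ae
  obtain ⟨ms, hms, hv_ae⟩ :=
    (tendstoInMeasure_of_tendsto_Lp (hv.comp hns.tendsto_atTop)).exists_seq_tendsto_ae
  filter_upwards [hu_ae, hv_ae, ae_all_iff.2 h] with x hux hvx hx
  exact tendsto_nhds_unique ((hux.comp hms.tendsto_atTop).const_mul (k x))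
    ((hvx.const_mul (l x)).congr fun n ↦ (hx (ns (ms n))).symm)

theorem tendsto_eLpNorm_mul_sub {α : Type*} [MeasurableSpace α] {μ : Measure α} {g : α → ℂ}
    (hg : MemLp g 2 μ) {u : ℕ → α → ℂ} (hu : ∀ n, AEStronglyMeasurable (u n) μ) {C : ℝ}
    (hC : ∀ n x, ‖u n x‖ ≤ C) (hlim : ∀ x, Tendsto (u · x) atTop (𝓝 1)) :
    Tendsto (fun n ↦ eLpNorm ((fun x ↦ g x * u n x) - g) 2 μ) atTop (𝓝 0) := by
  have hdom : Tendsto (fun n ↦ ∫⁻ x, ‖g x * u n x - g x‖ₑ ^ 2 ∂μ) atTop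
      (𝓝 (∫⁻ x, ‖g x * 1 - g x‖ₑ ^ 2 ∂μ)) := by
    refine tendsto_lintegral_of_dominated_convergence' (fun x ↦ ‖g x * (C + 1)‖ₑ ^ 2)
      (fun n ↦ ((hg.1.mul (hu n)).sub hg.1).enorm.pow_const 2) (fun n ↦ ae_of_all _ fun x ↦ ?_)
      ((memLp_two_iff_lintegral (hg.1.mul_const _)).1 (hg.mul_const _)).ne
      (ae_of_all _ fun x ↦ ENNReal.Tendsto.pow (((hlim x).const_mul _).sub_const _).enorm)
    have hnonneg : 0 ≤ C + 1 := by linarith [(norm_nonneg _).trans (hC n x)]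
    have hle : ‖u n x - 1‖ ≤ ‖(C + 1 : ℂ)‖ := calc
      ‖u n x - 1‖ ≤ ‖u n x‖ + ‖(1 : ℂ)‖ := norm_sub_le _ _
      _ ≤ C + 1 := by rw [norm_one]; linarith [hC n x]
      _ = ‖(C + 1 : ℂ)‖ := by norm_cast; exact (Real.norm_of_nonneg hnonneg).symm
    change ‖g x * u n x - g x‖ₑ ^ 2 ≤ ‖g x * (C + 1)‖ₑ ^ 2
    rw [← mul_sub_one, enorm_mul, enorm_mul]
    gcongr
    exact enorm_le_iff_norm_le.2 hle
  have hsq : Tendsto (fun n ↦ (eLpNorm ((fun x ↦ g x * u n x) - g) 2 μ ^ 2) ^ (2⁻¹ : ℝ)) atTop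
      (𝓝 (0 ^ (2⁻¹ : ℝ))) := by
    simp only [mul_one, sub_self, enorm_zero, ne_eq, OfNat.ofNat_ne_zero, not_false_eq_true,
      zero_pow, lintegral_zero] at hdom
    simp only [← lintegral_enorm_sq_eq]
    exact hdom.ennrpow_const _
  simpa only [← ENNReal.rpow_natCast, ← ENNReal.rpow_mul, Nat.cast_ofNat, ne_eq,
    OfNat.ofNat_ne_zero, not_false_eq_true, mul_inv_cancel₀, ENNReal.rpow_one, inv_pos,
    Nat.ofNat_pos, ENNReal.zero_rpow_of_pos] using hsq

variable {V : Type*} [NormedAddCommGroup V] [InnerProductSpace ℝ V]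

theorem norm_gaussianCharacter_zero_le {ε : ℝ} (hε : ε ∈ Ioc 0 1) (x y : V) :
    ‖gaussianCharacter ε 0 x y‖ ≤ Real.exp (‖y‖ ^ 2) := by
  rw [norm_gaussianCharacter, ← Real.exp_add, inner_zero_right, Real.exp_le_exp]
  nlinarith [mul_nonneg hε.1.le (sq_nonneg ‖x‖), mul_nonneg (sub_nonneg.2 hε.2) (sq_nonneg ‖y‖)]

variable [FiniteDimensional ℝ V] [MeasurableSpace V] [BorelSpace V]

theorem memLp_mul_gaussian {g : V → ℂ} (hg : MemLp g 2) {ε : ℝ} (hε : ε ∈ Ioc 0 1) (y : V) :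
    MemLp (fun x ↦ g x * gaussianCharacter ε 0 x y) 2 := by
  refine hg.of_le_mul (c := Real.exp (‖y‖ ^ 2))
    (hg.1.mul (memLp_gaussianCharacter hε.1 0 y).1) (ae_of_all _ fun x ↦ ?_)
  rw [norm_mul, mul_comm]
  gcongr
  exact norm_gaussianCharacter_zero_le hε x y

theorem fourier_toLp_mul_gaussian_ae_eq {g : V → ℂ} (hg : MemLp g 2) {ε : ℝ}
    (hε : ε ∈ Ioc 0 1) (y : V) :
    (𝓕 ((memLp_mul_gaussian hg hε y).toLp _) : Lp ℂ 2 (volume : Measure V)) =ᵐ[volume]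
      𝓕 fun x ↦ g x * gaussianCharacter ε 0 x y :=
  fourier_toLp_ae_eq (hg.integrable_mul (memLp_gaussianCharacter hε.1 0 y)) _

theorem tendsto_fourier_toLp_mul_gaussian {g : V → ℂ} (hg : MemLp g 2) (y : V) {ε : ℕ → ℝ}
    (hε : ∀ n, ε n ∈ Ioc 0 1) (hlim : Tendsto ε atTop (𝓝 0)) :
    Tendsto (fun n ↦ (𝓕 ((memLp_mul_gaussian hg (hε n) y).toLp _) :
      Lp ℂ 2 (volume : Measure V))) atTop (𝓝 (𝓕 (hg.toLp g))) := by
  refine (ContinuousFourier.continuous_fourier.tendsto _).comp ?_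
  rw [Lp.tendsto_Lp_iff_tendsto_eLpNorm'']
  refine tendsto_eLpNorm_mul_sub hg (fun n ↦ (memLp_gaussianCharacter (hε n).1 0 y).1)
    (fun n x ↦ norm_gaussianCharacter_zero_le (hε n) x y) fun x ↦ ?_
  have hcont : Continuous fun ε : ℝ ↦ gaussianCharacter ε 0 x y := by
    unfold gaussianCharacter
    fun_prop
  simpa [gaussianCharacter, complexInner, Function.comp_def] using (hcont.tendsto 0).comp hlim

/-- The exponential tilt `e^{-2π⟨y, ξ⟩} f ξ`: the Fourier transform of the slice at height `y` of
the holomorphic function on the tube whose amplitude is `f`. -/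
def expTwist (f : V → ℂ) (y ξ : V) : ℂ := Real.exp (-2 * Real.pi * ⟪y, ξ⟫) * f ξ

variable {Ω : Set V} {F : V → V → ℂ}

theorem HolomorphicOnTube.fourier_toLp_eq (hF : HolomorphicOnTube Ω F) {y y' : V}
    (hseg : segment ℝ y y' ⊆ Ω) (hy : MemLp (fun x ↦ F x y) 2) (hy' : MemLp (fun x ↦ F x y') 2)
    (hfin : ∫⁻ t in Ioc (0 : ℝ) 1, ∫⁻ x, ‖F x (y + t • (y' - y))‖ₑ ^ 2 < ⊤) :
    ∀ᵐ ξ, (Real.exp (2 * Real.pi * ⟪y, ξ⟫) : ℂ) * (𝓕 (hy.toLp _) : Lp ℂ 2 (volume : Measure V)) ξ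
      = (Real.exp (2 * Real.pi * ⟪y', ξ⟫) : ℂ)
        * (𝓕 (hy'.toLp _) : Lp ℂ 2 (volume : Measure V)) ξ := by
  let ε : ℕ → ℝ := fun n ↦ 1 / (n + 1)
  have hε (n) : ε n ∈ Ioc 0 1 :=
    ⟨by positivity, by simpa [ε] using Nat.one_div_le_one_div (α := ℝ) n.zero_le⟩
  have hlim : Tendsto ε atTop (𝓝 0) := tendsto_one_div_add_atTop_nhds_zero_nat
  refine ae_mul_eq_mul_of_tendsto (tendsto_fourier_toLp_mul_gaussian hy y hε hlim)
    (tendsto_fourier_toLp_mul_gaussian hy' y' hε hlim) fun n ↦ ?_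
  filter_upwards [fourier_toLp_mul_gaussian_ae_eq hy (hε n) y,
    fourier_toLp_mul_gaussian_ae_eq hy' (hε n) y'] with ξ hξ hξ'
  rw [hξ, hξ']
  exact hF.fourier_mul_gaussian_eq hseg hy hy' hfin (hε n).1 ξ

/-- The slice `x ↦ F (x + iy)` is square integrable, with Fourier transform `e^{-2π⟨y, ξ⟩} f ξ`;
in other words `F (x + iy) = ∫ f ξ e^{2πi⟨x + iy, ξ⟩} dξ` in the sense of Plancherel. -/
def HasAmplitudeAt (F : V → V → ℂ) (f : V → ℂ) (y : V) : Prop :=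
  ∃ hy : MemLp (fun x ↦ F x y) 2,
    (𝓕 (hy.toLp _) : Lp ℂ 2 (volume : Measure V)) =ᵐ[volume] expTwist f y

theorem HolomorphicOnTube.exists_amplitude (hF : HolomorphicOnTube Ω F) {Y : Set V}
    (hY : ∀ y ∈ Y, MemLp (fun x ↦ F x y) 2) (hseg : ∀ y ∈ Y, ∀ y' ∈ Y, segment ℝ y y' ⊆ Ω)
    (hfin : ∀ y ∈ Y, ∀ y' ∈ Y, ∫⁻ t in Ioc (0 : ℝ) 1, ∫⁻ x, ‖F x (y + t • (y' - y))‖ₑ ^ 2 < ⊤) :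
    ∃ f : V → ℂ, Measurable f ∧ ∀ y ∈ Y, HasAmplitudeAt F f y := by
  rcases Y.eq_empty_or_nonempty with rfl | ⟨y₀, hy₀⟩
  · exact ⟨0, measurable_zero, fun y hy ↦ hy.elim⟩
  let u : Lp ℂ 2 (volume : Measure V) := 𝓕 ((hY y₀ hy₀).toLp _)
  refine ⟨fun ξ ↦ Real.exp (2 * Real.pi * ⟪y₀, ξ⟫) * u ξ,
    .mul (by fun_prop) (Lp.stronglyMeasurable u).measurable, fun y hy ↦ ⟨hY y hy, ?_⟩⟩
  filter_upwards [hF.fourier_toLp_eq (hseg y hy y₀ hy₀) (hY y hy) (hY y₀ hy₀)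
    (hfin y hy y₀ hy₀)] with ξ hξ
  rw [expTwist, ← hξ, ← mul_assoc, ← Complex.ofReal_mul, ← Real.exp_add]
  simp

variable {f : V → ℂ} {y : V}

theorem HasAmplitudeAt.memLp_expTwist (h : HasAmplitudeAt F f y) : MemLp (expTwist f y) 2 := by
  obtain ⟨hy, hae⟩ := h
  exact (Lp.memLp _).ae_eq hae

theorem HasAmplitudeAt.lintegral_enorm_sq_expTwist (h : HasAmplitudeAt F f y) :
    ∫⁻ ξ, ‖expTwist f y ξ‖ₑ ^ 2 = ∫⁻ x, ‖F x y‖ₑ ^ 2 := by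
  obtain ⟨hy, hae⟩ := h
  rw [← lintegral_enorm_sq_fourier_toLp hy]
  refine lintegral_congr_ae ?_
  filter_upwards [hae] with ξ hξ
  rw [hξ]

theorem HasAmplitudeAt.congr {g : V → ℂ} (h : HasAmplitudeAt F f y) (hfg : f =ᵐ[volume] g) :
    HasAmplitudeAt F g y := by
  obtain ⟨hy, hae⟩ := h
  refine ⟨hy, hae.trans (hfg.mono fun ξ hξ ↦ ?_)⟩
  simp only [expTwist, hξ]

theorem HasAmplitudeAt.eq_fourierInv (h : HasAmplitudeAt F f y)
    (hint : Integrable (expTwist f y)) (hcont : Continuous fun x ↦ F x y) (x : V) :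
    F x y = 𝓕⁻ (expTwist f y) x := by
  obtain ⟨hy, hae⟩ := id h
  have htoLp : h.memLp_expTwist.toLp _ = 𝓕 (hy.toLp _) :=
    Lp.ext (h.memLp_expTwist.coeFn_toLp.trans hae.symm)
  have hinv := fourierInv_toLp_ae_eq hint h.memLp_expTwist
  rw [htoLp, FourierTransform.fourierInv_fourier_eq] at hinv
  exact congrFun ((hcont.ae_eq_iff_eq volume (continuous_fourierInv hint)).1
    (hy.coeFn_toLp.symm.trans hinv)) x

end Amplitude

section AmplitudeSupport

variable {V : Type*} [NormedAddCommGroup V] [InnerProductSpace ℝ V] {f : V → ℂ}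

theorem enorm_sq_expTwist (f : V → ℂ) (y ξ : V) :
    ‖expTwist f y ξ‖ₑ ^ 2 = ENNReal.ofReal (Real.exp (-4 * Real.pi * ⟪y, ξ⟫)) * ‖f ξ‖ₑ ^ 2 := by
  rw [expTwist, enorm_mul, mul_pow, ← ofReal_norm, Complex.norm_real, Real.norm_of_nonneg
    (Real.exp_nonneg _), ← ENNReal.ofReal_pow (Real.exp_nonneg _), ← Real.exp_nat_mul]
  push_cast
  ring_nf

variable [MeasurableSpace V] [BorelSpace V] [SecondCountableTopology V] {μ : Measure V}

theorem measurable_expTwist (hf : Measurable f) (y : V) : Measurable (expTwist f y) := by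
  unfold expTwist
  fun_prop

theorem lintegral_liminf_expTwist_le (hf : Measurable f) {M : ℝ≥0∞} {y : ℕ → V}
    (h : ∀ n, ∫⁻ ξ, ‖expTwist f (y n) ξ‖ₑ ^ 2 ∂μ ≤ M) :
    ∫⁻ ξ, liminf (fun n ↦ ‖expTwist f (y n) ξ‖ₑ ^ 2) atTop ∂μ ≤ M :=
  (lintegral_liminf_le fun n ↦ (measurable_expTwist hf (y n)).enorm.pow_const 2).trans
    (liminf_le_of_le (by isBoundedDefault) fun b hb ↦ hb.exists.elim fun n hn ↦ hn.trans (h n))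

theorem ae_eq_zero_of_lintegral_expTwist_le (hf : Measurable f) {M : ℝ≥0∞} (hM : M ≠ ⊤) {v : V}
    (h : ∀ s : ℝ, 0 < s → ∫⁻ ξ, ‖expTwist f (s • v) ξ‖ₑ ^ 2 ∂μ ≤ M) :
    ∀ᵐ ξ ∂μ, ⟪v, ξ⟫ < 0 → f ξ = 0 := by
  have hle := lintegral_liminf_expTwist_le (y := fun n : ℕ ↦ ((n : ℝ) + 1) • v) hf
    fun n ↦ h _ (by positivity)
  filter_upwards [ae_lt_top (.liminf fun n ↦ (measurable_expTwist hf _).enorm.pow_const 2)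
    (hle.trans_lt hM.lt_top).ne] with ξ hξ hv
  by_contra hfξ
  refine hξ.ne (Tendsto.liminf_eq ?_)
  have hexp : Tendsto (fun n : ℕ ↦ -4 * Real.pi * ⟪((n : ℝ) + 1) • v, ξ⟫) atTop atTop := by
    have hpos : 0 < -4 * Real.pi * ⟪v, ξ⟫ := by nlinarith [Real.pi_pos]
    have := ((tendsto_natCast_atTop_atTop (R := ℝ)).atTop_add
      (tendsto_const_nhds (x := 1))).atTop_mul_const hpos
    refine this.congr fun n ↦ ?_
    rw [real_inner_smul_left]
    ring
  simp only [enorm_sq_expTwist]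
  have hf0 : ‖f ξ‖ₑ ^ 2 ≠ 0 := by simpa using hfξ
  rw [← ENNReal.top_mul hf0]
  exact ENNReal.Tendsto.mul_const
    (ENNReal.tendsto_ofReal_atTop.comp (Real.tendsto_exp_atTop.comp hexp))
    (.inl ENNReal.top_ne_zero)

theorem lintegral_enorm_sq_le_of_expTwist_le (hf : Measurable f) {M : ℝ≥0∞} {v : V}
    (h : ∀ s : ℝ, 0 < s → ∫⁻ ξ, ‖expTwist f (s • v) ξ‖ₑ ^ 2 ∂μ ≤ M) :
    ∫⁻ ξ, ‖f ξ‖ₑ ^ 2 ∂μ ≤ M := by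
  refine le_of_eq_of_le (lintegral_congr fun ξ ↦ ?_)
    (lintegral_liminf_expTwist_le (y := fun n : ℕ ↦ (1 / ((n : ℝ) + 1)) • v) hf
      fun n ↦ h _ (by positivity))
  refine (Tendsto.liminf_eq ?_).symm
  have hcont : Continuous fun s : ℝ ↦ ‖expTwist f (s • v) ξ‖ₑ ^ 2 := by
    refine (ENNReal.continuous_pow 2).comp (Continuous.enorm ?_)
    unfold expTwist
    fun_prop
  have := (hcont.tendsto 0).comp (tendsto_one_div_add_atTop_nhds_zero_nat (𝕜 := ℝ))
  simpa [expTwist, Function.comp_def] using this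

end AmplitudeSupport

section FourierLaplace

variable {ι : Type*}

/-- The real part of a point of `ℂ^ι`, as a Euclidean vector. -/
def reVec (z : ι → ℂ) : EuclideanSpace ℝ ι := WithLp.toLp 2 fun i ↦ (z i).re

/-- The imaginary part of a point of `ℂ^ι`, as a Euclidean vector. -/
def imVec (z : ι → ℂ) : EuclideanSpace ℝ ι := WithLp.toLp 2 fun i ↦ (z i).im

theorem continuous_imVec : Continuous (imVec : (ι → ℂ) → EuclideanSpace ℝ ι) := by
  unfold imVec
  fun_prop

variable [Fintype ι]

/-- The complex-bilinear pairing `z ↦ ⟨z, ξ⟩` with a real frequency `ξ`, as a functional. -/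
def pairingCLM (ξ : EuclideanSpace ℝ ι) : (ι → ℂ) →L[ℂ] ℂ :=
  ∑ i, (ξ i : ℂ) • ContinuousLinearMap.proj i

/-- The Fourier–Laplace transform `z ↦ ∫ a ξ e^{2πi⟨z, ξ⟩} dξ` of an amplitude `a`. -/
def fourierLaplace (a : EuclideanSpace ℝ ι → ℂ) (z : ι → ℂ) : ℂ :=
  ∫ ξ, a ξ * Complex.exp (2 * Real.pi * Complex.I * pairingCLM ξ z)

theorem continuous_pairingCLM : Continuous (pairingCLM (ι := ι)) := by
  unfold pairingCLM
  fun_prop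

theorem pairingCLM_apply (ξ : EuclideanSpace ℝ ι) (z : ι → ℂ) :
    pairingCLM ξ z = complexInner (reVec z) (imVec z) ξ := by
  simp only [pairingCLM, complexInner, reVec, imVec, sum_apply, smul_apply,
    ContinuousLinearMap.proj_apply, smul_eq_mul, PiLp.inner_apply, RCLike.inner_apply, conj_trivial,
    Complex.ofReal_sum, Complex.ofReal_mul, Finset.mul_sum, ← Finset.sum_add_distrib]
  refine Finset.sum_congr rfl fun i _ ↦ ?_
  linear_combination -(ξ i : ℂ) * Complex.re_add_im (z i)

theorem norm_pairingCLM_le (ξ : EuclideanSpace ℝ ι) : ‖pairingCLM ξ‖ ≤ Fintype.card ι * ‖ξ‖ := by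
  refine (norm_sum_le _ _).trans ((Finset.sum_le_card_nsmul _ _ ‖ξ‖ fun i _ ↦ ?_).trans_eq
    (by simp))
  rw [norm_smul, Complex.norm_real]
  refine (mul_le_of_le_one_right (norm_nonneg _) ?_).trans (PiLp.norm_apply_le ξ i)
  exact ContinuousLinearMap.opNorm_le_bound _ zero_le_one fun z ↦ by
    simpa using norm_le_pi_norm z i

theorem exp_pairingCLM (ξ : EuclideanSpace ℝ ι) (z : ι → ℂ) :
    Complex.exp (2 * Real.pi * Complex.I * pairingCLM ξ z)
      = Complex.exp (2 * Real.pi * ⟪ξ, reVec z⟫ * Complex.I)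
        * Real.exp (-2 * Real.pi * ⟪imVec z, ξ⟫) := by
  rw [pairingCLM_apply, complexInner, real_inner_comm ξ, Complex.ofReal_exp, ← Complex.exp_add]
  congr 1
  push_cast
  linear_combination (2 * Real.pi * ⟪imVec z, ξ⟫ : ℂ) * Complex.I_sq

theorem fourierLaplace_eq_fourierInv (a : EuclideanSpace ℝ ι → ℂ) (z : ι → ℂ) :
    fourierLaplace a z = 𝓕⁻ (expTwist a (imVec z)) (reVec z) := by
  rw [fourierLaplace, Real.fourierInv_eq']
  refine integral_congr_ae (ae_of_all _ fun ξ ↦ ?_)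
  simp only [exp_pairingCLM, expTwist, smul_eq_mul, Complex.ofReal_mul, Complex.ofReal_ofNat]
  ring

theorem norm_mul_exp_pairingCLM (a : EuclideanSpace ℝ ι → ℂ) (ξ : EuclideanSpace ℝ ι)
    (z : ι → ℂ) : ‖a ξ * Complex.exp (2 * Real.pi * Complex.I * pairingCLM ξ z)‖
      = Real.exp (-2 * Real.pi * ⟪imVec z, ξ⟫) * ‖a ξ‖ := by
  rw [exp_pairingCLM, norm_mul, norm_mul, Complex.norm_real,
    Real.norm_of_nonneg (Real.exp_nonneg _), mul_comm]
  have : ‖Complex.exp (2 * Real.pi * ⟪ξ, reVec z⟫ * Complex.I)‖ = 1 := by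
    exact_mod_cast Complex.norm_exp_ofReal_mul_I (2 * Real.pi * ⟪ξ, reVec z⟫)
  rw [this, one_mul]

end FourierLaplace

section StrictDual

variable {V : Type*} [NormedAddCommGroup V] [InnerProductSpace ℝ V]

/-- The vectors `y` that are uniformly positive on the unit vectors of the cone `K`; for a closed
cone in finite dimension, the interior of its dual. -/
def strictDual (K : Set V) : Set V := {y | ∃ c > 0, ∀ ξ ∈ K, c * ‖ξ‖ ≤ ⟪y, ξ⟫}

theorem exists_nhds_forall_le_inner {K : Set V} {y : V} (hy : y ∈ strictDual K) :
    ∃ c > 0, ∀ᶠ w in 𝓝 y, ∀ ξ ∈ K, c * ‖ξ‖ ≤ ⟪w, ξ⟫ := by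
  obtain ⟨c, hc, hy⟩ := hy
  refine ⟨c / 2, half_pos hc, ?_⟩
  filter_upwards [Metric.ball_mem_nhds y (half_pos hc)] with w hw ξ hξ
  have hdiff : ⟪y - w, ξ⟫ ≤ c / 2 * ‖ξ‖ := (real_inner_le_norm _ _).trans (by
    gcongr
    rw [norm_sub_rev]
    exact (mem_ball_iff_norm.1 hw).le)
  rw [inner_sub_left] at hdiff
  linarith [hy ξ hξ]

theorem isOpen_strictDual (K : Set V) : IsOpen (strictDual K) := by
  refine isOpen_iff_mem_nhds.2 fun y hy ↦ ?_
  obtain ⟨c, hc, hnhds⟩ := exists_nhds_forall_le_inner hy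
  filter_upwards [hnhds] with w hw
  exact ⟨c, hc, hw⟩

variable [FiniteDimensional ℝ V] [MeasurableSpace V] [BorelSpace V]

/-- An amplitude supported in the cone `K` and of subexponential growth in the integrated sense, so
that its Fourier–Laplace transform converges on the tube over `strictDual K`. -/
structure IsConeAmplitude (K : Set V) (a : V → ℂ) : Prop where
  ae_eq_zero : ∀ᵐ ξ, ξ ∉ K → a ξ = 0
  integrable : ∀ c : ℝ, 0 < c → Integrable fun ξ ↦ (Real.exp (-c * ‖ξ‖) : ℂ) * a ξ

namespace IsConeAmplitude

variable {K : Set V} {a : V → ℂ}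

theorem aestronglyMeasurable (ha : IsConeAmplitude K a) : AEStronglyMeasurable a := by
  have hexp : AEStronglyMeasurable fun ξ : V ↦ (Real.exp ‖ξ‖ : ℂ) :=
    Continuous.aestronglyMeasurable (by fun_prop)
  refine (hexp.mul (ha.integrable 1 one_pos).1).congr (ae_of_all _ fun ξ ↦ ?_)
  simp [← mul_assoc, ← Complex.exp_add]

theorem mul_of_norm_le (ha : IsConeAmplitude K a) {g : V → ℂ} (hg : AEStronglyMeasurable g)
    {C : ℝ} {n : ℕ} (hC0 : 0 ≤ C) (hC : ∀ ξ, ‖g ξ‖ ≤ C * ‖ξ‖ ^ n) :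
    IsConeAmplitude K fun ξ ↦ g ξ * a ξ where
  ae_eq_zero := ha.ae_eq_zero.mono fun ξ h hξ ↦ by rw [h hξ, mul_zero]
  integrable c hc := by
    have hexp : AEStronglyMeasurable fun ξ : V ↦ (Real.exp (-c * ‖ξ‖) : ℂ) :=
      Continuous.aestronglyMeasurable (by fun_prop)
    refine ((ha.integrable (c / 2) (half_pos hc)).norm.const_mul
      (C * (n.factorial * (2 / c) ^ n))).mono' (hexp.mul (hg.mul ha.aestronglyMeasurable))
      (ae_of_all _ fun ξ ↦ ?_)
    have hpow : ‖ξ‖ ^ n ≤ n.factorial * (2 / c) ^ n * Real.exp (c / 2 * ‖ξ‖) := by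
      have h := Real.pow_div_factorial_le_exp (c / 2 * ‖ξ‖) (by positivity) n
      rw [div_le_iff₀ (by positivity), mul_pow] at h
      calc ‖ξ‖ ^ n = (2 / c) ^ n * ((c / 2) ^ n * ‖ξ‖ ^ n) := by
            rw [← mul_assoc, ← mul_pow, div_mul_div_cancel₀' two_ne_zero, div_self hc.ne', one_pow,
              one_mul]
        _ ≤ (2 / c) ^ n * (Real.exp (c / 2 * ‖ξ‖) * n.factorial) := by gcongr
        _ = _ := by ring
    have hexp_half : Real.exp (-c * ‖ξ‖) * Real.exp (c / 2 * ‖ξ‖) = Real.exp (-(c / 2) * ‖ξ‖) := by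
      rw [← Real.exp_add]
      ring_nf
    simp only [norm_mul, Complex.norm_real, Real.norm_of_nonneg (Real.exp_nonneg _)]
    calc Real.exp (-c * ‖ξ‖) * (‖g ξ‖ * ‖a ξ‖)
        ≤ Real.exp (-c * ‖ξ‖) * (C * (n.factorial * (2 / c) ^ n * Real.exp (c / 2 * ‖ξ‖)) * ‖a ξ‖)
          := by gcongr; exact (hC ξ).trans (by gcongr)
      _ = _ := by rw [← hexp_half]; ring

theorem exp_inner_mul_norm_le (ha : IsConeAmplitude K a) : ∀ᵐ ξ, ∀ (y : V) (c : ℝ),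
    (∀ ξ ∈ K, c * ‖ξ‖ ≤ ⟪y, ξ⟫) →
      Real.exp (-2 * Real.pi * ⟪y, ξ⟫) * ‖a ξ‖
        ≤ ‖(Real.exp (-(2 * Real.pi * c) * ‖ξ‖) : ℂ) * a ξ‖ := by
  filter_upwards [ha.ae_eq_zero] with ξ hξ y c hy
  by_cases hK : ξ ∈ K
  · rw [norm_mul, Complex.norm_real, Real.norm_of_nonneg (Real.exp_nonneg _)]
    refine mul_le_mul_of_nonneg_right (Real.exp_le_exp.2 ?_) (norm_nonneg _)
    linarith [mul_le_mul_of_nonneg_left (hy ξ hK) Real.two_pi_pos.le]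
  · simp [hξ hK]

theorem integrable_expTwist (ha : IsConeAmplitude K a) {y : V} (hy : y ∈ strictDual K) :
    Integrable (expTwist a y) := by
  obtain ⟨c, hc, hy⟩ := hy
  have hexp : AEStronglyMeasurable fun ξ : V ↦ (Real.exp (-2 * Real.pi * ⟪y, ξ⟫) : ℂ) :=
    Continuous.aestronglyMeasurable (by fun_prop)
  refine (ha.integrable (2 * Real.pi * c) (by positivity)).norm.mono'
    (hexp.mul ha.aestronglyMeasurable) ?_
  filter_upwards [ha.exp_inner_mul_norm_le] with ξ hξ
  rw [expTwist, norm_mul, Complex.norm_real, Real.norm_of_nonneg (Real.exp_nonneg _)]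
  exact hξ y c hy

end IsConeAmplitude

end StrictDual

section FourierLaplaceDeriv

variable {ι : Type*} [Fintype ι] {K : Set (EuclideanSpace ℝ ι)} {a : EuclideanSpace ℝ ι → ℂ}
  {z : ι → ℂ}

theorem norm_smul_pairingCLM_le (ξ : EuclideanSpace ℝ ι) :
    ‖(2 * Real.pi * Complex.I) • pairingCLM ξ‖ ≤ 2 * Real.pi * Fintype.card ι * ‖ξ‖ := by
  have h2π : ‖(2 * Real.pi * Complex.I : ℂ)‖ = 2 * Real.pi := by
    simp [abs_of_pos Real.pi_pos]
  rw [norm_smul, h2π, mul_assoc (2 * Real.pi)]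
  gcongr
  exact norm_pairingCLM_le ξ

namespace IsConeAmplitude

theorem ofReal_norm_mul (ha : IsConeAmplitude K a) : IsConeAmplitude K fun ξ ↦ (‖ξ‖ : ℂ) * a ξ :=
  ha.mul_of_norm_le (C := 1) (n := 1) (Continuous.aestronglyMeasurable (by fun_prop))
    zero_le_one (by simp)

theorem aestronglyMeasurable_mul_exp (ha : IsConeAmplitude K a) (w : ι → ℂ) :
    AEStronglyMeasurable fun ξ ↦
      a ξ * Complex.exp (2 * Real.pi * Complex.I * pairingCLM ξ w) := by
  have := continuous_pairingCLM (ι := ι)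
  exact ha.aestronglyMeasurable.mul (Continuous.aestronglyMeasurable (by fun_prop))

theorem integrable_mul_exp (ha : IsConeAmplitude K a) (hz : imVec z ∈ strictDual K) :
    Integrable fun ξ ↦ a ξ * Complex.exp (2 * Real.pi * Complex.I * pairingCLM ξ z) := by
  refine (ha.integrable_expTwist hz).norm.mono' (ha.aestronglyMeasurable_mul_exp z)
    (ae_of_all _ fun ξ ↦ ?_)
  rw [norm_mul_exp_pairingCLM, expTwist, norm_mul, Complex.norm_real,
    Real.norm_of_nonneg (Real.exp_nonneg _)]

theorem aestronglyMeasurable_fderiv (ha : IsConeAmplitude K a) (w : ι → ℂ) :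
    AEStronglyMeasurable fun ξ ↦
      (a ξ * Complex.exp (2 * Real.pi * Complex.I * pairingCLM ξ w))
        • (2 * Real.pi * Complex.I) • pairingCLM ξ :=
  (ha.aestronglyMeasurable_mul_exp w).smul
    (continuous_pairingCLM.const_smul (2 * Real.pi * Complex.I : ℂ)).aestronglyMeasurable

theorem integrable_fderiv (ha : IsConeAmplitude K a) (hz : imVec z ∈ strictDual K) :
    Integrable fun ξ ↦ (a ξ * Complex.exp (2 * Real.pi * Complex.I * pairingCLM ξ z))
      • (2 * Real.pi * Complex.I) • pairingCLM ξ := by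
  refine ((ha.ofReal_norm_mul.integrable_mul_exp hz).norm.const_mul
    (2 * Real.pi * Fintype.card ι)).mono'
    (ha.aestronglyMeasurable_fderiv z) (ae_of_all _ fun ξ ↦ ?_)
  calc _ ≤ ‖a ξ * Complex.exp (2 * Real.pi * Complex.I * pairingCLM ξ z)‖
        * (2 * Real.pi * Fintype.card ι * ‖ξ‖) := by
        rw [norm_smul]
        gcongr
        exact norm_smul_pairingCLM_le ξ
    _ = _ := by simp only [norm_mul, Complex.norm_real, norm_norm]; ring

theorem hasFDerivAt_fourierLaplace (ha : IsConeAmplitude K a)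
    (hz : imVec z ∈ strictDual K) : HasFDerivAt (fourierLaplace a)
      (∫ ξ, (a ξ * Complex.exp (2 * Real.pi * Complex.I * pairingCLM ξ z))
        • (2 * Real.pi * Complex.I) • pairingCLM ξ) z := by
  obtain ⟨c, hc, hnhds⟩ := exists_nhds_forall_le_inner hz
  refine hasFDerivAt_integral_of_dominated_of_fderiv_le
    (F' := fun w ξ ↦ (a ξ * Complex.exp (2 * Real.pi * Complex.I * pairingCLM ξ w))
      • (2 * Real.pi * Complex.I) • pairingCLM ξ)
    (continuous_imVec.continuousAt.preimage_mem_nhds hnhds)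
    (.of_forall ha.aestronglyMeasurable_mul_exp) (ha.integrable_mul_exp hz)
    (ha.aestronglyMeasurable_fderiv z) ?_
    ((ha.ofReal_norm_mul.integrable (2 * Real.pi * c) (by positivity)).norm.const_mul
      (2 * Real.pi * Fintype.card ι)) (ae_of_all _ fun ξ w _ ↦ ?_)
  · filter_upwards [ha.exp_inner_mul_norm_le] with ξ hξ w hw
    rw [norm_smul, norm_mul_exp_pairingCLM]
    calc _ ≤ ‖(Real.exp (-(2 * Real.pi * c) * ‖ξ‖) : ℂ) * a ξ‖
          * (2 * Real.pi * Fintype.card ι * ‖ξ‖) := by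
          gcongr
          · exact hξ _ c hw
          · exact norm_smul_pairingCLM_le ξ
      _ = _ := by simp only [norm_mul, Complex.norm_real, norm_norm]; ring
  · have h := (((pairingCLM ξ).hasFDerivAt (x := w)).const_mul
      (2 * Real.pi * Complex.I)).cexp.const_mul (a ξ)
    rwa [smul_smul] at h

theorem fderiv_fourierLaplace_apply (ha : IsConeAmplitude K a) (hz : imVec z ∈ strictDual K)
    (v : ι → ℂ) : fderiv ℂ (fourierLaplace a) z v
      = fourierLaplace (fun ξ ↦ 2 * Real.pi * Complex.I * pairingCLM ξ v * a ξ) z := by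
  rw [(ha.hasFDerivAt_fourierLaplace hz).fderiv,
    ContinuousLinearMap.integral_apply (ha.integrable_fderiv hz)]
  refine integral_congr_ae (ae_of_all _ fun ξ ↦ ?_)
  simp only [smul_apply, smul_eq_mul]
  ring

theorem mul_pairingCLM (ha : IsConeAmplitude K a) (v : ι → ℂ) :
    IsConeAmplitude K fun ξ ↦ 2 * Real.pi * Complex.I * pairingCLM ξ v * a ξ := by
  have := continuous_pairingCLM (ι := ι)
  refine ha.mul_of_norm_le (C := 2 * Real.pi * Fintype.card ι * ‖v‖) (n := 1)
    (Continuous.aestronglyMeasurable (by fun_prop)) (by positivity) fun ξ ↦ ?_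
  calc _ ≤ ‖(2 * Real.pi * Complex.I) • pairingCLM ξ‖ * ‖v‖ := by
        simpa using ((2 * Real.pi * Complex.I : ℂ) • pairingCLM ξ).le_opNorm v
    _ ≤ 2 * Real.pi * Fintype.card ι * ‖ξ‖ * ‖v‖ := by gcongr; exact norm_smul_pairingCLM_le ξ
    _ = _ := by ring

end IsConeAmplitude

end FourierLaplaceDeriv

section Box

variable {K : Set (EuclideanSpace ℝ (Fin 3))} {a : EuclideanSpace ℝ (Fin 3) → ℂ}
  {F : (Fin 3 → ℂ) → ℂ} {U : Set (Fin 3 → ℂ)}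

/-- The Fourier multiplier of `Box`. -/
def boxSymbol (ξ : EuclideanSpace ℝ (Fin 3)) : ℝ := 4 * Real.pi ^ 2 * DeltaL ξ

theorem continuous_boxSymbol : Continuous boxSymbol := by
  unfold boxSymbol DeltaL
  fun_prop

theorem pairingCLM_single (ξ : EuclideanSpace ℝ (Fin 3)) (i : Fin 3) :
    pairingCLM ξ (Pi.single i 1) = ξ i := by
  simp [pairingCLM, Pi.single_apply]

theorem IsConeAmplitude.coord_mul (ha : IsConeAmplitude K a) (i : Fin 3) :
    IsConeAmplitude K fun ξ ↦ 2 * Real.pi * Complex.I * ξ i * a ξ := by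
  simpa only [pairingCLM_single] using ha.mul_pairingCLM (Pi.single i 1)

theorem pd_eqOn_fourierLaplace (hU : IsOpen U) (hUK : MapsTo imVec U (strictDual K))
    (ha : IsConeAmplitude K a) (hF : EqOn F (fourierLaplace a) U) (i : Fin 3) :
    EqOn (pd i F) (fourierLaplace fun ξ ↦ 2 * Real.pi * Complex.I * ξ i * a ξ) U := by
  intro z hz
  rw [pd, (hF.eventuallyEq_of_mem (hU.mem_nhds hz)).fderiv_eq,
    ha.fderiv_fourierLaplace_apply (hUK hz)]
  simp only [pairingCLM_single]

theorem IsConeAmplitude.boxSymbol_pow_mul (ha : IsConeAmplitude K a) (m : ℕ) :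
    IsConeAmplitude K fun ξ ↦ (boxSymbol ξ : ℂ) ^ m * a ξ := by
  have := continuous_boxSymbol
  refine ha.mul_of_norm_le (C := (4 * Real.pi ^ 2) ^ m) (n := 2 * m)
    (Continuous.aestronglyMeasurable (by fun_prop)) (by positivity) fun ξ ↦ ?_
  have hΔ : |DeltaL ξ| ≤ ‖ξ‖ ^ 2 := by
    rw [EuclideanSpace.norm_sq_eq, Fin.sum_univ_three, DeltaL, abs_le]
    simp only [Real.norm_eq_abs, sq_abs]
    constructor <;> nlinarith [sq_nonneg (ξ 0), sq_nonneg (ξ 1), sq_nonneg (ξ 2)]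
  rw [norm_pow, Complex.norm_real, boxSymbol, norm_mul, Real.norm_of_nonneg (by positivity),
    Real.norm_eq_abs, pow_mul, ← mul_pow]
  gcongr

theorem box_eqOn_fourierLaplace (hU : IsOpen U) (hUK : MapsTo imVec U (strictDual K))
    (ha : IsConeAmplitude K a) (hF : EqOn F (fourierLaplace a) U) :
    EqOn (Box F) (fourierLaplace fun ξ ↦ boxSymbol ξ * a ξ) U := by
  intro z hz
  have hpd (i : Fin 3) := pd_eqOn_fourierLaplace hU hUK (ha.coord_mul i)
    (pd_eqOn_fourierLaplace hU hUK ha hF i) i hz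
  have hint (i : Fin 3) := ((ha.coord_mul i).coord_mul i).integrable_mul_exp (hUK hz)
  simp only [Box, hpd, fourierLaplace]
  rw [neg_add_eq_sub, ← integral_sub (hint 1) (hint 0)]
  refine (integral_add ((hint 1).sub (hint 0)) (hint 2)).symm.trans
    (integral_congr_ae (ae_of_all _ fun ξ ↦ ?_))
  simp only [boxSymbol, DeltaL, Pi.sub_apply]
  push_cast
  linear_combination (4 * Real.pi ^ 2 * (-(ξ 0 : ℂ) ^ 2 + ξ 1 ^ 2 + ξ 2 ^ 2) * a ξ
    * Complex.exp (2 * Real.pi * Complex.I * pairingCLM ξ z)) * Complex.I_sq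

theorem box_iterate_eqOn_fourierLaplace (hU : IsOpen U) (hUK : MapsTo imVec U (strictDual K))
    (ha : IsConeAmplitude K a) (hF : EqOn F (fourierLaplace a) U) (m : ℕ) :
    EqOn (Box^[m] F) (fourierLaplace fun ξ ↦ (boxSymbol ξ : ℂ) ^ m * a ξ) U := by
  induction m with
  | zero => simpa only [pow_zero, one_mul, Function.iterate_zero, id] using hF
  | succ m ih =>
    simp only [Function.iterate_succ_apply', pow_succ', mul_assoc]
    exact box_eqOn_fourierLaplace hU hUK (ha.boxSymbol_pow_mul m) ih

end Box

section Slice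

variable {n : ℕ}

/-- The coordinates `ξ = (t, η)` of a frequency with respect to the axis of the cone. -/
def axisEquiv (n : ℕ) : ℝ × (Fin n → ℝ) ≃ᵐ EuclideanSpace ℝ (Fin (n + 1)) :=
  (MeasurableEquiv.piFinSuccAbove (fun _ ↦ ℝ) 0).symm.trans (MeasurableEquiv.toLp 2 _)

theorem axisEquiv_zero (p : ℝ × (Fin n → ℝ)) : axisEquiv n p 0 = p.1 := by
  simp [axisEquiv]

theorem axisEquiv_succ (p : ℝ × (Fin n → ℝ)) (i : Fin n) : axisEquiv n p i.succ = p.2 i := by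
  simp [axisEquiv]

theorem measurePreserving_axisEquiv (n : ℕ) : MeasurePreserving (axisEquiv n) :=
  ((volume_preserving_piFinSuccAbove (fun _ ↦ ℝ) 0).symm _).trans
    (EuclideanSpace.volume_preserving_symm_measurableEquiv_toLp _).symm

theorem lintegral_axisEquiv {φ : EuclideanSpace ℝ (Fin (n + 1)) → ℝ≥0∞} (hφ : Measurable φ) :
    ∫⁻ ξ, φ ξ = ∫⁻ t, ∫⁻ η, φ (axisEquiv n (t, η)) := by
  rw [← (measurePreserving_axisEquiv n).lintegral_comp hφ]
  exact lintegral_prod _ (hφ.comp (axisEquiv n).measurable).aemeasurable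

/-- The integral of an amplitude over the hyperplane at height `t` along the axis of the cone. -/
def sliceIntegral (a : EuclideanSpace ℝ (Fin (n + 1)) → ℂ) (t : ℝ) : ℂ :=
  ∫ η, a (axisEquiv n (t, η))

theorem measurable_sliceIntegral {a : EuclideanSpace ℝ (Fin (n + 1)) → ℂ} (ha : Measurable a) :
    Measurable (sliceIntegral a) :=
  (ha.comp (axisEquiv n).measurable).stronglyMeasurable.integral_prod_right'.measurable

theorem integral_axisEquiv {a : EuclideanSpace ℝ (Fin (n + 1)) → ℂ} (ha : Integrable a) :
    ∫ ξ, a ξ = ∫ t, sliceIntegral a t := by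
  have hmp := measurePreserving_axisEquiv n
  rw [← hmp.integral_comp (axisEquiv n).measurableEmbedding]
  exact integral_prod _ ((hmp.integrable_comp_emb (axisEquiv n).measurableEmbedding).2 ha)

theorem integrable_sliceIntegral {a : EuclideanSpace ℝ (Fin (n + 1)) → ℂ} (ha : Integrable a) :
    Integrable (sliceIntegral a) :=
  (((measurePreserving_axisEquiv n).integrable_comp_emb
    (axisEquiv n).measurableEmbedding).2 ha).integral_prod_left

/-- The cone over a cube, `{(t, η) : ‖η‖_∞ ≤ r t}`. -/
def boxCone (n : ℕ) (r : ℝ) : Set (EuclideanSpace ℝ (Fin (n + 1))) :=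
  {ξ | ‖fun i : Fin n ↦ ξ i.succ‖ ≤ r * ξ 0}

theorem measurableSet_boxCone (r : ℝ) : MeasurableSet (boxCone n r) :=
  (isClosed_le (by fun_prop) (by fun_prop)).measurableSet

theorem axisEquiv_mem_boxCone {r t : ℝ} {η : Fin n → ℝ} :
    axisEquiv n (t, η) ∈ boxCone n r ↔ η ∈ Metric.closedBall 0 (r * t) := by
  simp [boxCone, axisEquiv_zero, axisEquiv_succ]

theorem zero_le_of_mem_boxCone {r : ℝ} (hr : 0 < r) {ξ : EuclideanSpace ℝ (Fin (n + 1))}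
    (hξ : ξ ∈ boxCone n r) : 0 ≤ ξ 0 :=
  nonneg_of_mul_nonneg_right ((norm_nonneg _).trans hξ) hr

theorem abs_succ_le_of_mem_boxCone {r : ℝ} {ξ : EuclideanSpace ℝ (Fin (n + 1))}
    (hξ : ξ ∈ boxCone n r) (i : Fin n) : |ξ i.succ| ≤ r * ξ 0 :=
  (norm_le_pi_norm (fun i : Fin n ↦ ξ i.succ) i).trans hξ

theorem norm_le_of_mem_boxCone {r : ℝ} (hr : 0 < r) {ξ : EuclideanSpace ℝ (Fin (n + 1))}
    (hξ : ξ ∈ boxCone n r) : ‖ξ‖ ≤ (1 + n * r) * ξ 0 := by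
  have h0 := zero_le_of_mem_boxCone hr hξ
  have hsum : ∑ i : Fin n, |ξ i.succ| ≤ n * (r * ξ 0) := by
    simpa using Finset.sum_le_card_nsmul Finset.univ _ _ fun i _ ↦ abs_succ_le_of_mem_boxCone hξ i
  have hle : ‖ξ‖ ≤ ∑ i, |ξ i| := by
    rw [EuclideanSpace.norm_eq]
    refine Real.sqrt_le_iff.2 ⟨Finset.sum_nonneg fun i _ ↦ abs_nonneg _, ?_⟩
    simpa only [Real.norm_eq_abs] using Finset.sum_sq_le_sq_sum_of_nonneg fun i _ ↦ abs_nonneg (ξ i)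
  rw [Fin.sum_univ_succ, abs_of_nonneg h0] at hle
  linarith

theorem mem_strictDual_boxCone {r : ℝ} (hr : 0 < r) {y : EuclideanSpace ℝ (Fin (n + 1))}
    (hy : r * ∑ i : Fin n, |y i.succ| < y 0) : y ∈ strictDual (boxCone n r) := by
  refine ⟨(y 0 - r * ∑ i : Fin n, |y i.succ|) / (1 + n * r),
    div_pos (sub_pos.2 hy) (by positivity), fun ξ hξ ↦ ?_⟩
  have hsum : -((∑ i : Fin n, |y i.succ|) * (r * ξ 0)) ≤ ∑ i : Fin n, ξ i.succ * y i.succ := by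
    rw [Finset.sum_mul, ← Finset.sum_neg_distrib]
    refine Finset.sum_le_sum fun i _ ↦ ?_
    have h := mul_le_mul_of_nonneg_left (abs_succ_le_of_mem_boxCone hξ i) (abs_nonneg (y i.succ))
    rw [← abs_mul] at h
    linarith [neg_abs_le (y i.succ * ξ i.succ)]
  calc _ ≤ (y 0 - r * ∑ i : Fin n, |y i.succ|) / (1 + n * r) * ((1 + n * r) * ξ 0) := by
        gcongr
        exact norm_le_of_mem_boxCone hr hξ
    _ = (y 0 - r * ∑ i : Fin n, |y i.succ|) * ξ 0 := by field_simp
    _ ≤ ⟪y, ξ⟫ := by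
        simp only [PiLp.inner_apply, RCLike.inner_apply, conj_trivial, Fin.sum_univ_succ]
        linarith

theorem enorm_sq_integral_le {α : Type*} [MeasurableSpace α] {μ : Measure α} {g : α → ℂ}
    (hg : AEStronglyMeasurable g μ) {s : Set α} (h : ∀ x ∉ s, g x = 0) :
    ‖∫ x, g x ∂μ‖ₑ ^ 2 ≤ μ s * ∫⁻ x, ‖g x‖ₑ ^ 2 ∂μ := by
  have hle := eLpNorm_le_eLpNorm_mul_rpow_measure_univ (p := 1) (q := 2) (by norm_num) hg.restrict
    (μ := μ.restrict s)
  rw [eLpNorm_one_eq_lintegral_enorm, Measure.restrict_apply_univ] at hle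
  rw [← setIntegral_eq_integral_of_forall_compl_eq_zero h]
  calc _ ≤ (∫⁻ x in s, ‖g x‖ₑ ∂μ) ^ 2 := by gcongr; exact enorm_integral_le_lintegral_enorm _
    _ ≤ (eLpNorm g 2 (μ.restrict s) * μ s ^ (1 / (1 : ℝ≥0∞).toReal - 1 / (2 : ℝ≥0∞).toReal)) ^ 2 :=
        by gcongr
    _ = μ s * ∫⁻ x in s, ‖g x‖ₑ ^ 2 ∂μ := by
        rw [mul_pow, lintegral_enorm_sq_eq, mul_comm, ← ENNReal.rpow_natCast (μ s ^ _),
          ← ENNReal.rpow_mul]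
        norm_num
    _ ≤ _ := by gcongr; exact Measure.restrict_le_self

theorem enorm_sq_sliceIntegral_le {r : ℝ} {a : EuclideanSpace ℝ (Fin (n + 1)) → ℂ}
    (ha : Measurable a) (hsupp : ∀ ξ ∉ boxCone n r, a ξ = 0) {t : ℝ} (ht : 0 ≤ r * t) :
    ‖sliceIntegral a t‖ₑ ^ 2
      ≤ ENNReal.ofReal ((2 * (r * t)) ^ n) * ∫⁻ η, ‖a (axisEquiv n (t, η))‖ₑ ^ 2 := by
  have hle := enorm_sq_integral_le (μ := volume) (g := fun η ↦ a (axisEquiv n (t, η)))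
    (ha.comp ((axisEquiv n).measurable.comp measurable_prodMk_left)).aestronglyMeasurable
    (s := Metric.closedBall 0 (r * t))
    fun η hη ↦ hsupp _ (axisEquiv_mem_boxCone.not.2 hη)
  rwa [Real.volume_pi_closedBall _ ht, Fintype.card_fin] at hle

end Slice

section AxisRestriction

variable {n : ℕ}

/-- The point `(z, 0, …, 0)` on the axis of the tube. -/
def axisPoint (n : ℕ) (z : ℂ) : Fin (n + 1) → ℂ := Pi.single 0 z

theorem inner_imVec_axisPoint (z : ℂ) (ξ : EuclideanSpace ℝ (Fin (n + 1))) :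
    ⟪imVec (axisPoint n z), ξ⟫ = z.im * ξ 0 := by
  simp [PiLp.inner_apply, Fin.sum_univ_succ, imVec, axisPoint, mul_comm]

theorem pairingCLM_axisPoint (z : ℂ) (ξ : EuclideanSpace ℝ (Fin (n + 1))) :
    pairingCLM ξ (axisPoint n z) = ξ 0 * z := by
  simp [pairingCLM, axisPoint, Pi.single_apply]

theorem imVec_axisPoint_mem_strictDual {r : ℝ} (hr : 0 < r) {z : ℂ} (hz : 0 < z.im) :
    imVec (axisPoint n z) ∈ strictDual (boxCone n r) :=
  mem_strictDual_boxCone hr (by simpa [imVec, axisPoint] using hz)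

theorem sliceIntegral_expTwist (a : EuclideanSpace ℝ (Fin (n + 1)) → ℂ) (z : ℂ) :
    sliceIntegral (expTwist a (imVec (axisPoint n z))) = expTwist (sliceIntegral a) z.im := by
  ext t
  simp only [sliceIntegral, expTwist, inner_imVec_axisPoint, axisEquiv_zero, integral_const_mul]
  simp [mul_comm t]

variable {r : ℝ} {a : EuclideanSpace ℝ (Fin (n + 1)) → ℂ} {z : ℂ}

theorem IsConeAmplitude.integrable_expTwist_sliceIntegral (hr : 0 < r)
    (ha : IsConeAmplitude (boxCone n r) a) (hz : 0 < z.im) :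
    Integrable (expTwist (sliceIntegral a) z.im) := by
  rw [← sliceIntegral_expTwist]
  exact integrable_sliceIntegral (ha.integrable_expTwist (imVec_axisPoint_mem_strictDual hr hz))

theorem IsConeAmplitude.fourierLaplace_axisPoint (hr : 0 < r)
    (ha : IsConeAmplitude (boxCone n r) a) (hz : 0 < z.im) :
    fourierLaplace a (axisPoint n z) = 𝓕⁻ (expTwist (sliceIntegral a) z.im) z.re := by
  rw [fourierLaplace, integral_axisEquiv (ha.integrable_mul_exp
    (imVec_axisPoint_mem_strictDual hr hz)), Real.fourierInv_eq']
  congr with t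
  simp only [sliceIntegral, pairingCLM_axisPoint, axisEquiv_zero, integral_mul_const, expTwist,
    smul_eq_mul, RCLike.inner_apply, conj_trivial]
  rw [mul_comm, Complex.ofReal_exp, ← mul_assoc (Complex.exp _), ← Complex.exp_add]
  congr 2
  push_cast
  linear_combination -(2 * Real.pi * Complex.I * t) * Complex.re_add_im z
    + (2 * Real.pi * t * z.im) * Complex.I_sq

end AxisRestriction

section Bergman

variable {G : ℂ → ℂ} {α : ℝ}

theorem isOpen_UHP : IsOpen UHP := isOpen_lt continuous_const Complex.continuous_im

theorem bergNormSqUHP_eq_setLIntegral (α : ℝ) (G : ℂ → ℂ) :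
    bergNormSqUHP α G = ∫⁻ z in UHP, ENNReal.ofReal (z.im ^ α) * ‖G z‖ₑ ^ 2 :=
  lintegral_withDensity_eq_lintegral_mul_non_measurable _ (by fun_prop)
    (ae_of_all _ fun _ ↦ ENNReal.ofReal_lt_top) _

theorem aemeasurable_slices (hG : ContinuousOn G UHP) :
    AEMeasurable (fun p : ℝ × ℝ ↦ ‖G (p.1 + p.2 * Complex.I)‖ₑ ^ 2)
      (volume.prod (volume.restrict (Ioi 0))) := by
  have hcont : ContinuousOn (fun p : ℝ × ℝ ↦ ‖G (p.1 + p.2 * Complex.I)‖ₑ ^ 2)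
      (univ ×ˢ Ioi 0) := by
    refine ((ENNReal.continuous_pow 2).comp continuous_enorm).comp_continuousOn
      (hG.comp (by fun_prop) fun p hp ↦ ?_)
    simpa [UHP] using hp
  have h := hcont.aemeasurable (μ := volume) (MeasurableSet.univ.prod measurableSet_Ioi)
  rwa [Measure.volume_eq_prod, ← Measure.prod_restrict, Measure.restrict_univ] at h

theorem setLIntegral_UHP (h : ℂ → ℝ≥0∞)
    (hm : AEMeasurable (fun p : ℝ × ℝ ↦ h (p.1 + p.2 * Complex.I))
      (volume.prod (volume.restrict (Ioi 0)))) :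
    ∫⁻ z in UHP, h z = ∫⁻ y in Ioi (0 : ℝ), ∫⁻ x : ℝ, h (x + y * Complex.I) := by
  have hpre : Complex.measurableEquivRealProd.symm ⁻¹' UHP = univ ×ˢ Ioi (0 : ℝ) := by
    ext p
    simp [UHP, Complex.measurableEquivRealProd]
  rw [← Complex.volume_preserving_equiv_real_prod.symm.setLIntegral_comp_preimage_emb
    (MeasurableEquiv.measurableEmbedding _), hpre, Measure.volume_eq_prod,
    ← Measure.prod_restrict, Measure.restrict_univ]
  simp only [Complex.measurableEquivRealProd_symm_apply, Complex.mk_eq_add_mul_I]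
  exact lintegral_prod_symm _ hm

theorem bergNormSqUHP_eq_lintegral_slices (hG : ContinuousOn G UHP) :
    bergNormSqUHP α G = ∫⁻ y in Ioi (0 : ℝ),
      ENNReal.ofReal (y ^ α) * ∫⁻ x : ℝ, ‖G (x + y * Complex.I)‖ₑ ^ 2 := by
  rw [bergNormSqUHP_eq_setLIntegral, setLIntegral_UHP]
  · simp [lintegral_const_mul' _ _ ENNReal.ofReal_ne_top]
  · simp only [Complex.add_im, Complex.ofReal_im, Complex.im_ofReal_mul, Complex.I_im, mul_one,
      zero_add]
    exact .mul (by fun_prop) (aemeasurable_slices hG)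

/-- The Laplace transform of `y ^ α` at `4πt`: the weight on frequencies that corresponds to the
weight `y ^ α` on the upper half-plane. -/
def bergWeight (α t : ℝ) : ℝ≥0∞ :=
  ∫⁻ y in Ioi (0 : ℝ), ENNReal.ofReal (y ^ α) * ENNReal.ofReal (Real.exp (-4 * Real.pi * (t * y)))

theorem measurable_bergWeight (α : ℝ) : Measurable (bergWeight α) :=
  Measurable.lintegral_prod_right (f := fun t y : ℝ ↦
    ENNReal.ofReal (y ^ α) * ENNReal.ofReal (Real.exp (-4 * Real.pi * (t * y)))) (by fun_prop)

theorem bergWeight_of_pos (hα : -1 < α) {t : ℝ} (ht : 0 < t) :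
    bergWeight α t = ENNReal.ofReal (Real.Gamma (α + 1) / (4 * Real.pi * t) ^ (α + 1)) := by
  have h := Real.integral_rpow_mul_exp_neg_mul_Ioi (a := α + 1) (r := 4 * Real.pi * t)
    (by linarith) (by positivity)
  rw [add_sub_cancel_right, one_div, Real.inv_rpow (by positivity)] at h
  rw [div_eq_inv_mul, ← h, bergWeight, ofReal_integral_eq_lintegral_ofReal]
  · refine setLIntegral_congr_fun measurableSet_Ioi fun y hy ↦ ?_
    rw [← ENNReal.ofReal_mul (Real.rpow_nonneg (mem_Ioi.1 hy).le _)]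
    ring_nf
  · refine not_imp_comm.1 integral_undef ?_
    rw [h]
    have := Real.Gamma_pos_of_pos (s := α + 1) (by linarith)
    positivity
  · filter_upwards [ae_restrict_mem measurableSet_Ioi] with y hy
    have := mem_Ioi.1 hy
    positivity

theorem bergWeight_of_nonpos (α : ℝ) {t : ℝ} (ht : t ≤ 0) : bergWeight α t = ⊤ := by
  have htop : ∫⁻ y in Ioi (0 : ℝ), ENNReal.ofReal (y ^ α) = ⊤ := by
    by_contra hne
    refine not_integrableOn_Ioi_rpow α ⟨by fun_prop, ?_⟩
    rw [hasFiniteIntegral_iff_ofReal]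
    · exact Ne.lt_top hne
    · filter_upwards [ae_restrict_mem measurableSet_Ioi] with y hy
      exact Real.rpow_nonneg (mem_Ioi.1 hy).le _
  refine top_unique (htop.ge.trans (setLIntegral_mono' measurableSet_Ioi fun y hy ↦ ?_))
  refine le_mul_of_one_le_right' (ENNReal.one_le_ofReal.2 (Real.one_le_exp ?_))
  nlinarith [Real.pi_pos, mul_nonneg (neg_nonneg.2 ht) (mem_Ioi.1 hy).le]

theorem lintegral_rpow_mul_lintegral_expTwist (α : ℝ) {h : ℝ → ℂ} (hh : Measurable h) :
    ∫⁻ y in Ioi (0 : ℝ), ENNReal.ofReal (y ^ α) * ∫⁻ t, ‖expTwist h y t‖ₑ ^ 2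
      = ∫⁻ t, bergWeight α t * ‖h t‖ₑ ^ 2 := by
  simp only [← lintegral_const_mul' _ _ ENNReal.ofReal_ne_top, enorm_sq_expTwist]
  rw [lintegral_lintegral_swap (by fun_prop)]
  refine lintegral_congr fun t ↦ ?_
  rw [bergWeight, ← lintegral_mul_const _ (by fun_prop)]
  simp only [mul_assoc, RCLike.inner_apply, conj_trivial]

theorem bergNormSqUHP_le_of_eqOn_fourierInv (hG : ContinuousOn G UHP) {h : ℝ → ℂ}
    (hh : Measurable h) (hint : ∀ y : ℝ, 0 < y → Integrable (expTwist h y))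
    (hGh : ∀ z ∈ UHP, G z = 𝓕⁻ (expTwist h z.im) z.re) :
    bergNormSqUHP α G ≤ ∫⁻ t, bergWeight α t * ‖h t‖ₑ ^ 2 := by
  rw [bergNormSqUHP_eq_lintegral_slices hG, ← lintegral_rpow_mul_lintegral_expTwist α hh]
  refine setLIntegral_mono' measurableSet_Ioi fun y hy ↦ ?_
  have hslice (x : ℝ) : G (x + y * Complex.I) = 𝓕⁻ (expTwist h y) x := by
    simpa using hGh (x + y * Complex.I) (by simpa [UHP] using hy)
  simp only [hslice]
  exact mul_le_mul_right (lintegral_enorm_sq_fourierInv_le (hint y hy)) _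

end Bergman

section BergmanPaleyWiener

variable {G : ℂ → ℂ} {α : ℝ}

theorem holomorphicOnTube_halfPlane (hG : DifferentiableOn ℂ G UHP) :
    HolomorphicOnTube (Ioi (0 : ℝ)) fun x y ↦ G (x + y * Complex.I) where
  continuousOn := hG.continuousOn.comp (by fun_prop) fun p hp ↦ by
    simpa [UHP] using (mem_prod.1 hp).2
  differentiableOn_line x y v := by
    have hline (ζ : ℂ) : ((x + ζ.re • v : ℝ) : ℂ) + ((y + ζ.im • v : ℝ) : ℂ) * Complex.I
        = x + y * Complex.I + ζ * v := by
      push_cast [smul_eq_mul]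
      linear_combination (v : ℂ) * Complex.re_add_im ζ
    simp only [hline]
    refine hG.comp (by fun_prop) fun ζ hζ ↦ ?_
    simpa [UHP] using hζ

theorem setLIntegral_comp_segment_lt_top {φ : ℝ → ℝ≥0∞}
    (hφ : ∀ a b, 0 < a → ∫⁻ u in Icc a b, φ u < ⊤)
    {y y' : ℝ} (hy : 0 < y) (hy' : 0 < y') (hφy : φ y < ⊤) :
    ∫⁻ t in Ioc (0 : ℝ) 1, φ (y + t • (y' - y)) < ⊤ := by
  rcases eq_or_ne y y' with rfl | hne
  · simpa using hφy
  have hinj : InjOn (fun t : ℝ ↦ y + t • (y' - y)) (Ioc 0 1) := fun s _ t _ h ↦ by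
    simpa [sub_ne_zero.2 hne.symm] using h
  have himage : (fun t : ℝ ↦ y + t • (y' - y)) '' Ioc 0 1 ⊆ uIcc y y' := by
    rw [← segment_eq_uIcc, segment_eq_image']
    exact image_mono Ioc_subset_Icc_self
  have hsubst := lintegral_image_eq_lintegral_abs_deriv_mul measurableSet_Ioc
    (fun t _ ↦ (((hasDerivAt_id t).smul_const (y' - y)).const_add y).hasDerivWithinAt) hinj φ
  have hlt := (lintegral_mono_set himage).trans_lt (hφ (min y y') (max y y') (lt_min hy hy'))
  simp only [id] at hsubst
  rw [hsubst, lintegral_const_mul' _ _ ENNReal.ofReal_ne_top] at hlt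
  refine ENNReal.lt_top_of_mul_ne_top_right hlt.ne ?_
  simp [sub_eq_zero, hne.symm]

theorem setLIntegral_Icc_lt_top_of_rpow {φ : ℝ → ℝ≥0∞}
    (hφ : ∫⁻ u in Ioi (0 : ℝ), ENNReal.ofReal (u ^ α) * φ u < ⊤) {a : ℝ} (ha : 0 < a) (b : ℝ) :
    ∫⁻ u in Icc a b, φ u < ⊤ := by
  have hpos {u : ℝ} (hu : u ∈ Icc a b) : 0 < u := ha.trans_le hu.1
  rcases (Icc a b).eq_empty_or_nonempty with hempty | hne
  · simp [hempty]
  obtain ⟨u₀, hu₀, hmin⟩ := isCompact_Icc.exists_isMinOn hne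
    (continuousOn_id.rpow_const fun u hu ↦ .inl (hpos hu).ne' : ContinuousOn (· ^ α) (Icc a b))
  have hle : ENNReal.ofReal (u₀ ^ α) * ∫⁻ u in Icc a b, φ u < ⊤ := by
    rw [← lintegral_const_mul' _ _ ENNReal.ofReal_ne_top]
    refine lt_of_le_of_lt ?_ ((lintegral_mono_set fun u hu ↦ hpos hu).trans_lt hφ)
    refine setLIntegral_mono' measurableSet_Icc fun u hu ↦ ?_
    exact mul_le_mul_left (ENNReal.ofReal_le_ofReal (hmin hu)) _
  exact ENNReal.lt_top_of_mul_ne_top_right hle.ne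
    (ENNReal.ofReal_pos.2 (Real.rpow_pos_of_pos (hpos hu₀) α)).ne'

theorem exists_amplitude_ae (hG : DifferentiableOn ℂ G UHP) (hα : bergNormSqUHP α G < ⊤) :
    ∃ g : ℝ → ℂ, Measurable g ∧ ∀ᵐ y, 0 < y →
      HasAmplitudeAt (fun x y : ℝ ↦ G (x + y * Complex.I)) g y := by
  have hF := holomorphicOnTube_halfPlane hG
  let φ : ℝ → ℝ≥0∞ := fun y ↦ ∫⁻ x : ℝ, ‖G (x + y * Complex.I)‖ₑ ^ 2
  rw [bergNormSqUHP_eq_lintegral_slices hG.continuousOn] at hα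
  obtain ⟨g, hg, hamp⟩ := hF.exists_amplitude (Y := {y | 0 < y ∧ φ y < ⊤})
    (fun y hy ↦ (memLp_two_iff_lintegral (hF.continuous_left hy.1).aestronglyMeasurable).2 hy.2)
    (fun y hy y' hy' ↦ (convex_Ioi 0).segment_subset hy.1 hy'.1)
    fun y hy y' hy' ↦ setLIntegral_comp_segment_lt_top (φ := φ)
      (fun a b ha ↦ setLIntegral_Icc_lt_top_of_rpow hα ha b) hy.1 hy'.1 hy.2
  refine ⟨g, hg, ?_⟩
  have hae := ae_lt_top' (.mul (by fun_prop)
    (aemeasurable_slices hG.continuousOn).lintegral_prod_left') hα.ne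
  filter_upwards [(ae_restrict_iff' measurableSet_Ioi).1 hae] with y hy hy0
  exact hamp y ⟨hy0, ENNReal.lt_top_of_mul_ne_top_right (hy hy0).ne
    (ENNReal.ofReal_pos.2 (Real.rpow_pos_of_pos hy0 α)).ne'⟩

theorem exists_amplitude_of_bergNormSqUHP_lt_top (hG : DifferentiableOn ℂ G UHP)
    (hα : bergNormSqUHP α G < ⊤) : ∃ g : ℝ → ℂ, Measurable g ∧ (∀ t ≤ 0, g t = 0) ∧
      (∀ᵐ y, 0 < y → HasAmplitudeAt (fun x y : ℝ ↦ G (x + y * Complex.I)) g y) ∧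
      ∫⁻ t, bergWeight α t * ‖g t‖ₑ ^ 2 = bergNormSqUHP α G := by
  obtain ⟨g, hg, hamp⟩ := exists_amplitude_ae hG hα
  have hnorm : ∫⁻ t, bergWeight α t * ‖g t‖ₑ ^ 2 = bergNormSqUHP α G := by
    rw [bergNormSqUHP_eq_lintegral_slices hG.continuousOn,
      ← lintegral_rpow_mul_lintegral_expTwist α hg]
    refine setLIntegral_congr_fun_ae measurableSet_Ioi (hamp.mono fun y h hy ↦ ?_)
    simp only [(h hy).lintegral_enorm_sq_expTwist]
  have hsupp : g =ᵐ[volume] (Ioi 0).indicator g := by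
    filter_upwards [ae_lt_top ((measurable_bergWeight α).mul (hg.enorm.pow_const 2))
      (hnorm.trans_lt hα).ne] with t ht
    by_cases h0 : 0 < t
    · rw [indicator_of_mem (mem_Ioi.2 h0)]
    · rw [indicator_of_notMem (by simpa using h0)]
      simpa [bergWeight_of_nonpos α (not_lt.1 h0), ENNReal.mul_lt_top_iff] using ht
  refine ⟨(Ioi 0).indicator g, hg.indicator measurableSet_Ioi,
    fun t ht ↦ indicator_of_notMem (by simpa using ht) _,
    hamp.mono fun y h hy ↦ (h hy).congr hsupp, ?_⟩
  rw [← hnorm]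
  exact lintegral_congr_ae (hsupp.mono fun t ht ↦ by simp only [← ht])

end BergmanPaleyWiener

section HardyPaleyWiener

variable {V : Type*} [NormedAddCommGroup V] [InnerProductSpace ℝ V] [FiniteDimensional ℝ V]
  [MeasurableSpace V] [BorelSpace V]

theorem integrable_exp_neg_mul_norm {c : ℝ} (hc : 0 < c) :
    Integrable fun ξ : V ↦ Real.exp (-c * ‖ξ‖) := by
  set n := Module.finrank ℝ V + 1 with hn
  have hdom : Integrable fun ξ : V ↦ (1 + ‖ξ‖) ^ (-(n : ℝ)) :=
    integrable_one_add_norm (by simp [hn])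
  refine (hdom.const_mul (Real.exp c * n.factorial / c ^ n)).mono'
    (Continuous.aestronglyMeasurable (by fun_prop)) (ae_of_all _ fun ξ ↦ ?_)
  have hexp := Real.pow_div_factorial_le_exp (c * (1 + ‖ξ‖)) (by positivity) n
  rw [Real.norm_of_nonneg (Real.exp_nonneg _), Real.rpow_neg (by positivity), Real.rpow_natCast,
    ← div_eq_mul_inv, div_div, ← mul_pow, le_div_iff₀ (by positivity)]
  rw [div_le_iff₀ (by positivity)] at hexp
  calc _ ≤ Real.exp (-c * ‖ξ‖) * (Real.exp (c * (1 + ‖ξ‖)) * n.factorial) := by gcongr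
    _ = _ := by rw [← mul_assoc, ← Real.exp_add]; ring_nf

theorem IsConeAmplitude.of_memLp {K : Set V} {f : V → ℂ} (hf : MemLp f 2)
    (hK : ∀ᵐ ξ, ξ ∉ K → f ξ = 0) : IsConeAmplitude K f where
  ae_eq_zero := hK
  integrable c hc := by
    have hexp : MemLp (fun ξ : V ↦ (Real.exp (-c * ‖ξ‖) : ℂ)) 2 := by
      rw [memLp_two_iff_integrable_sq_norm (Continuous.aestronglyMeasurable (by fun_prop))]
      refine (integrable_exp_neg_mul_norm (V := V) (mul_pos two_pos hc)).congr
        (ae_of_all _ fun ξ ↦ ?_)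
      simp only [Complex.norm_real, Real.norm_of_nonneg (Real.exp_nonneg _), ← Real.exp_nat_mul]
      ring_nf
    exact hexp.integrable_mul hf

theorem HolomorphicOnTube.exists_amplitude_of_hardy {Ω : Set V} {F : V → V → ℂ} {M : ℝ≥0∞}
    (hF : HolomorphicOnTube Ω F) (hΩ : Convex ℝ Ω) (hcone : ∀ s : ℝ, 0 < s → ∀ y ∈ Ω, s • y ∈ Ω)
    (hne : Ω.Nonempty) (hM : M < ⊤) (hFM : ∀ y ∈ Ω, ∫⁻ x, ‖F x y‖ₑ ^ 2 ≤ M) :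
    ∃ f : V → ℂ, Measurable f ∧ (∀ y ∈ Ω, HasAmplitudeAt F f y) ∧ ∫⁻ ξ, ‖f ξ‖ₑ ^ 2 ≤ M ∧
      ∀ y ∈ Ω, ∀ᵐ ξ, ⟪y, ξ⟫ < 0 → f ξ = 0 := by
  obtain ⟨f, hf, hamp⟩ := hF.exists_amplitude (Y := Ω)
    (fun y hy ↦ (memLp_two_iff_lintegral (hF.continuous_left hy).aestronglyMeasurable).2
      ((hFM y hy).trans_lt hM))
    (fun y hy y' hy' ↦ hΩ.segment_subset hy hy') fun y hy y' hy' ↦ by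
      calc _ ≤ ∫⁻ _ in Ioc (0 : ℝ) 1, M := setLIntegral_mono' measurableSet_Ioc fun t ht ↦
            hFM _ (hΩ.add_smul_sub_mem hy hy' (Ioc_subset_Icc_self ht))
        _ < ⊤ := by simpa using hM
  have htwist : ∀ y ∈ Ω, ∀ s : ℝ, 0 < s → ∫⁻ ξ, ‖expTwist f (s • y) ξ‖ₑ ^ 2 ≤ M :=
    fun y hy s hs ↦ (hamp _ (hcone s hs y hy)).lintegral_enorm_sq_expTwist.trans_le
      (hFM _ (hcone s hs y hy))
  obtain ⟨v, hv⟩ := hne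
  exact ⟨f, hf, hamp, lintegral_enorm_sq_le_of_expTwist_le hf (htwist v hv),
    fun y hy ↦ ae_eq_zero_of_lintegral_expTwist_le hf hM.ne (htwist y hy)⟩

end HardyPaleyWiener

section LorentzCone

variable {ι : Type*}

/-- The point `x + i y` of `ℂ^ι`. -/
def tubePoint (x y : EuclideanSpace ℝ ι) : ι → ℂ := fun i ↦ x i + y i * Complex.I

@[simp]
theorem imVec_tubePoint (x y : EuclideanSpace ℝ ι) : imVec (tubePoint x y) = y := by
  ext i
  simp [imVec, tubePoint]

@[simp]
theorem reVec_tubePoint (x y : EuclideanSpace ℝ ι) : reVec (tubePoint x y) = x := by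
  ext i
  simp [reVec, tubePoint]

@[simp]
theorem tubePoint_reVec_imVec (z : ι → ℂ) : tubePoint (reVec z) (imVec z) = z := by
  ext i
  simp [reVec, imVec, tubePoint]

theorem holomorphicOnTube_tubePoint [Fintype ι] {Ω : Set (EuclideanSpace ℝ ι)} {F : (ι → ℂ) → ℂ}
    (hF : DifferentiableOn ℂ F (imVec ⁻¹' Ω)) :
    HolomorphicOnTube Ω fun x y ↦ F (tubePoint x y) where
  continuousOn := by
    refine hF.continuousOn.comp (Continuous.continuousOn ?_) fun p hp ↦ ?_
    · unfold tubePoint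
      fun_prop
    · simpa using hp
  differentiableOn_line x y v := by
    have hline : (fun ζ : ℂ ↦ tubePoint (x + ζ.re • v) (y + ζ.im • v))
        = fun ζ i ↦ tubePoint x y i + ζ * v i := by
      ext ζ i
      simp only [tubePoint, PiLp.add_apply, PiLp.smul_apply, smul_eq_mul]
      push_cast
      linear_combination (v i : ℂ) * Complex.re_add_im ζ
    refine hF.comp (t := imVec ⁻¹' Ω) (g := F)
      (f := fun ζ : ℂ ↦ tubePoint (x + ζ.re • v) (y + ζ.im • v)) ?_ fun ζ hζ ↦ ?_
    · rw [hline]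
      fun_prop
    · simpa using hζ

/-- The cone `Lambda3`, as a set of Euclidean vectors. -/
def lorentzCone : Set (EuclideanSpace ℝ (Fin 3)) := WithLp.ofLp ⁻¹' Lambda3

theorem mem_lorentzCone {y : EuclideanSpace ℝ (Fin 3)} :
    y ∈ lorentzCone ↔ 0 < y 0 ∧ y 1 ^ 2 + y 2 ^ 2 < y 0 ^ 2 := by
  change 0 < y 0 + y 1 ∧ 0 < y 0 ^ 2 - y 1 ^ 2 - y 2 ^ 2 ↔ _
  constructor <;> rintro ⟨h₀, h⟩ <;> constructor <;> nlinarith [sq_nonneg (y 2)]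

theorem isOpen_lorentzCone : IsOpen lorentzCone := by
  have hcone : lorentzCone = {y | 0 < y 0} ∩ {y | y 1 ^ 2 + y 2 ^ 2 < y 0 ^ 2} :=
    Set.ext fun y ↦ mem_lorentzCone
  rw [hcone]
  exact (isOpen_lt (by fun_prop) (by fun_prop)).inter (isOpen_lt (by fun_prop) (by fun_prop))

theorem smul_mem_lorentzCone {s : ℝ} (hs : 0 < s) {y : EuclideanSpace ℝ (Fin 3)}
    (hy : y ∈ lorentzCone) : s • y ∈ lorentzCone := by
  rw [mem_lorentzCone] at hy ⊢
  simp only [PiLp.smul_apply, smul_eq_mul]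
  exact ⟨mul_pos hs hy.1, by nlinarith [mul_lt_mul_of_pos_left hy.2 (sq_pos_of_pos hs)]⟩

theorem add_mem_lorentzCone {y w : EuclideanSpace ℝ (Fin 3)} (hy : y ∈ lorentzCone)
    (hw : w ∈ lorentzCone) : y + w ∈ lorentzCone := by
  rw [mem_lorentzCone] at hy hw ⊢
  have hcauchy : y 1 * w 1 + y 2 * w 2 < y 0 * w 0 := by
    refine lt_of_pow_lt_pow_left₀ 2 (mul_pos hy.1 hw.1).le ?_
    calc (y 1 * w 1 + y 2 * w 2) ^ 2 ≤ (y 1 ^ 2 + y 2 ^ 2) * (w 1 ^ 2 + w 2 ^ 2) := by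
          nlinarith [sq_nonneg (y 1 * w 2 - y 2 * w 1)]
      _ < y 0 ^ 2 * w 0 ^ 2 := mul_lt_mul'' hy.2 hw.2 (by positivity) (by positivity)
      _ = (y 0 * w 0) ^ 2 := by ring
  simp only [PiLp.add_apply]
  exact ⟨add_pos hy.1 hw.1, by nlinarith [hy.2, hw.2]⟩

theorem convex_lorentzCone : Convex ℝ lorentzCone :=
  convex_iff_forall_pos.2 fun _ hy _ hw _ _ ha hb _ ↦
    add_mem_lorentzCone (smul_mem_lorentzCone ha hy) (smul_mem_lorentzCone hb hw)

theorem hardyNormSq_eq_iSup (F : (Fin 3 → ℂ) → ℂ) :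
    hardyNormSq F = ⨆ y ∈ lorentzCone, ∫⁻ x, ‖F (tubePoint x y)‖ₑ ^ 2 := by
  have hslice (y : EuclideanSpace ℝ (Fin 3)) : ∫⁻ x, ‖F (tubePoint x y)‖ₑ ^ 2
      = ∫⁻ x : Fin 3 → ℝ, (‖F fun i ↦ (x i : ℂ) + (y i : ℂ) * Complex.I‖₊ : ℝ≥0∞) ^ 2 :=
    (EuclideanSpace.volume_preserving_symm_measurableEquiv_toLp (Fin 3)).lintegral_comp_emb
      (MeasurableEquiv.measurableEmbedding _)
      fun x ↦ ‖F fun i ↦ (x i : ℂ) + (y i : ℂ) * Complex.I‖ₑ ^ 2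
  simp only [hslice]
  exact (WithLp.equiv 2 (Fin 3 → ℝ)).symm.iSup_congr fun y ↦ rfl

/-- The support even lies in the closed Lorentz cone, which is self-dual; the larger `boxCone 2 2`
suffices and has cubes as sections. -/
theorem ae_eq_zero_of_notMem_boxCone {f : EuclideanSpace ℝ (Fin 3) → ℂ}
    (hf : ∀ y ∈ lorentzCone, ∀ᵐ ξ, ⟪y, ξ⟫ < 0 → f ξ = 0) : ∀ᵐ ξ, ξ ∉ boxCone 2 2 → f ξ = 0 := by
  have hdir (a b : ℝ) (hab : a ^ 2 + b ^ 2 = 1) :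
      ∀ᵐ ξ, f ξ ≠ 0 → 0 ≤ 2 * ξ 0 + a * ξ 1 + b * ξ 2 := by
    have hmem : !₂[2, a, b] ∈ lorentzCone := mem_lorentzCone.2 ⟨two_pos, by
      change a ^ 2 + b ^ 2 < 2 ^ 2
      linarith⟩
    filter_upwards [hf _ hmem] with ξ h hξ
    have := not_lt.1 (mt h hξ)
    simpa [PiLp.inner_apply, Fin.sum_univ_three, mul_comm] using this
  filter_upwards [hdir 1 0 (by norm_num), hdir (-1) 0 (by norm_num), hdir 0 1 (by norm_num),
    hdir 0 (-1) (by norm_num)] with ξ h₁ h₁' h₂ h₂'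
  contrapose!
  intro hξ
  specialize h₁ hξ
  specialize h₁' hξ
  specialize h₂ hξ
  specialize h₂' hξ
  refine (pi_norm_le_iff_of_nonneg (by linarith)).2 fun i ↦ abs_le.2 ?_
  fin_cases i <;> dsimp <;> constructor <;> linarith

theorem exists_amplitude_of_hardyNormSq_lt_top {F : (Fin 3 → ℂ) → ℂ}
    (hF : DifferentiableOn ℂ F TLambda3) (hfin : hardyNormSq F < ⊤) :
    ∃ f, Measurable f ∧ (∀ ξ ∉ boxCone 2 2, f ξ = 0) ∧ IsConeAmplitude (boxCone 2 2) f ∧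
      ∫⁻ ξ, ‖f ξ‖ₑ ^ 2 ≤ hardyNormSq F ∧
      EqOn F (fourierLaplace f) (imVec ⁻¹' (lorentzCone ∩ strictDual (boxCone 2 2))) := by
  have hbound : ∀ y ∈ lorentzCone, ∫⁻ x, ‖F (tubePoint x y)‖ₑ ^ 2 ≤ hardyNormSq F := by
    rw [hardyNormSq_eq_iSup]
    exact fun y hy ↦ le_iSup₂_of_le y hy le_rfl
  have hne : lorentzCone.Nonempty := ⟨!₂[1, 0, 0], mem_lorentzCone.2 (by simp)⟩
  have hhol : HolomorphicOnTube lorentzCone fun x y ↦ F (tubePoint x y) :=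
    holomorphicOnTube_tubePoint hF
  obtain ⟨f, hf, hamp, hnorm, hneg⟩ := hhol.exists_amplitude_of_hardy convex_lorentzCone
    (fun s hs y hy ↦ smul_mem_lorentzCone hs hy) hne hfin hbound
  set g := (boxCone 2 2).indicator f
  have hfg : f =ᵐ[volume] g := (ae_eq_zero_of_notMem_boxCone hneg).mono fun ξ hξ ↦
    (indicator_apply_eq_self.2 hξ).symm
  have hgm : Measurable g := hf.indicator (measurableSet_boxCone 2)
  have hgnorm : ∫⁻ ξ, ‖g ξ‖ₑ ^ 2 ≤ hardyNormSq F :=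
    (lintegral_congr_ae (hfg.mono fun ξ hξ ↦ by simp only [hξ])).ge.trans hnorm
  have hgcone : IsConeAmplitude (boxCone 2 2) g := .of_memLp
    ((memLp_two_iff_lintegral hgm.aestronglyMeasurable).2 (hgnorm.trans_lt hfin))
    (ae_of_all _ fun ξ hξ ↦ indicator_of_notMem hξ f)
  refine ⟨g, hgm, fun ξ hξ ↦ indicator_of_notMem hξ f, hgcone, hgnorm, fun z hz ↦ ?_⟩
  have hinv := ((hamp _ hz.1).congr hfg).eq_fourierInv (hgcone.integrable_expTwist hz.2)
    (hhol.continuous_left hz.1) (reVec z)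
  rwa [tubePoint_reVec_imVec, ← fourierLaplace_eq_fourierInv] at hinv

end LorentzCone

section Restriction

variable {n m : ℕ} {r t : ℝ} {z : ℂ}

theorem vec_eq_axisPoint (z : ℂ) : ![z, 0, 0] = axisPoint 2 z := by
  ext i
  fin_cases i <;> rfl

theorem axisPoint_mem_preimage_lorentzCone (hz : z ∈ UHP) :
    axisPoint 2 z ∈ imVec ⁻¹' lorentzCone :=
  mem_lorentzCone.2 (⟨hz, by simpa [imVec, axisPoint] using pow_pos hz.out 2⟩)

theorem IsConeAmplitude.differentiableOn_fourierLaplace_axisPoint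
    {a : EuclideanSpace ℝ (Fin (n + 1)) → ℂ} (hr : 0 < r) (ha : IsConeAmplitude (boxCone n r) a) :
    DifferentiableOn ℂ (fun z ↦ fourierLaplace a (axisPoint n z)) UHP := fun z hz ↦
  ((ha.hasFDerivAt_fourierLaplace (imVec_axisPoint_mem_strictDual hr hz)).differentiableAt.comp z
    ((ContinuousLinearMap.single ℂ (fun _ ↦ ℂ) 0).differentiableAt)).differentiableWithinAt

theorem bergWeight_natCast (k : ℕ) (ht : 0 < t) : bergWeight k t
    = ENNReal.ofReal (k.factorial / ((4 * Real.pi) ^ (k + 1) * t ^ (k + 1))) := by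
  rw [bergWeight_of_pos (by linarith [k.cast_nonneg (α := ℝ)]) ht, Real.Gamma_nat_eq_factorial,
    ← Nat.cast_add_one, Real.rpow_natCast, mul_pow]

variable {f : EuclideanSpace ℝ (Fin 3) → ℂ}

theorem measurable_boxSymbol_pow_mul (hf : Measurable f) (m : ℕ) :
    Measurable fun ξ ↦ (boxSymbol ξ : ℂ) ^ m * f ξ := by
  have := continuous_boxSymbol
  exact (Continuous.measurable (by fun_prop)).mul hf

theorem abs_boxSymbol_le {ξ : EuclideanSpace ℝ (Fin 3)} (hξ : ξ ∈ boxCone 2 2) :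
    |boxSymbol ξ| ≤ 28 * Real.pi ^ 2 * ξ 0 ^ 2 := by
  have h₁ : |ξ 1| ≤ 2 * ξ 0 := abs_succ_le_of_mem_boxCone hξ 0
  have h₂ : |ξ 2| ≤ 2 * ξ 0 := abs_succ_le_of_mem_boxCone hξ 1
  have hΔ : |DeltaL ξ| ≤ 7 * ξ 0 ^ 2 := by
    rw [DeltaL, abs_le]
    constructor <;> nlinarith [sq_le_sq' (abs_le.1 h₁).1 (abs_le.1 h₁).2,
      sq_le_sq' (abs_le.1 h₂).1 (abs_le.1 h₂).2, sq_nonneg (ξ 1), sq_nonneg (ξ 2)]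
  rw [boxSymbol, abs_mul, abs_of_pos (by positivity)]
  linarith [mul_le_mul_of_nonneg_left hΔ (show 0 ≤ 4 * Real.pi ^ 2 by positivity)]

theorem enorm_sq_boxSymbol_pow_mul_le (hsupp : ∀ ξ ∉ boxCone 2 2, f ξ = 0)
    (ξ : EuclideanSpace ℝ (Fin 3)) : ‖(boxSymbol ξ : ℂ) ^ m * f ξ‖ₑ ^ 2
      ≤ ENNReal.ofReal ((28 * Real.pi ^ 2 * ξ 0 ^ 2) ^ (2 * m)) * ‖f ξ‖ₑ ^ 2 := by
  by_cases hξ : ξ ∈ boxCone 2 2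
  · have hpow : ‖(boxSymbol ξ : ℂ) ^ m‖ ^ 2 ≤ (28 * Real.pi ^ 2 * ξ 0 ^ 2) ^ (2 * m) := by
      rw [norm_pow, Complex.norm_real, Real.norm_eq_abs, ← pow_mul, mul_comm m]
      exact pow_le_pow_left₀ (abs_nonneg _) (abs_boxSymbol_le hξ) _
    rw [enorm_mul, mul_pow, ← ofReal_norm, ← ENNReal.ofReal_pow (norm_nonneg _)]
    exact mul_le_mul_left (ENNReal.ofReal_le_ofReal hpow) _
  · simp [hsupp ξ hξ]

theorem enorm_sq_sliceIntegral_boxSymbol_pow_mul_le (hf : Measurable f)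
    (hsupp : ∀ ξ ∉ boxCone 2 2, f ξ = 0) (m : ℕ) (ht : 0 < t) :
    ‖sliceIntegral (fun ξ ↦ (boxSymbol ξ : ℂ) ^ m * f ξ) t‖ₑ ^ 2
      ≤ ENNReal.ofReal (16 * (28 * Real.pi ^ 2) ^ (2 * m) * t ^ (4 * m + 2))
        * ∫⁻ η, ‖f (axisEquiv 2 (t, η))‖ₑ ^ 2 := by
  calc _ ≤ ENNReal.ofReal ((2 * (2 * t)) ^ 2)
        * ∫⁻ η, ‖(boxSymbol (axisEquiv 2 (t, η)) : ℂ) ^ m * f (axisEquiv 2 (t, η))‖ₑ ^ 2 :=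
        enorm_sq_sliceIntegral_le (measurable_boxSymbol_pow_mul hf m)
          (fun ξ hξ ↦ by rw [hsupp ξ hξ, mul_zero]) (by positivity)
    _ ≤ ENNReal.ofReal ((2 * (2 * t)) ^ 2) * ∫⁻ η,
        ENNReal.ofReal ((28 * Real.pi ^ 2 * t ^ 2) ^ (2 * m)) * ‖f (axisEquiv 2 (t, η))‖ₑ ^ 2 :=
        mul_le_mul_right (lintegral_mono fun η ↦ by
          simpa only [axisEquiv_zero] using
            enorm_sq_boxSymbol_pow_mul_le hsupp (m := m) (axisEquiv 2 (t, η))) _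
    _ = _ := by
        rw [lintegral_const_mul' _ _ ENNReal.ofReal_ne_top, ← mul_assoc,
          ← ENNReal.ofReal_mul (by positivity)]
        ring_nf

/-- A bound for the squared operator norm of the restriction `F ↦ Box^[m] F (·, 0, 0)` from
`H²(T_{Λ₃})` to `A²_{4m+1}(Π⁺)`. -/
def restrictionConst (m : ℕ) : ℝ :=
  (4 * m + 1).factorial * 16 * (28 * Real.pi ^ 2) ^ (2 * m) / (4 * Real.pi) ^ (4 * m + 2)

theorem restrictionConst_pos (m : ℕ) : 0 < restrictionConst m := by
  unfold restrictionConst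
  positivity

theorem bergWeight_mul_enorm_sq_sliceIntegral_le (hf : Measurable f)
    (hsupp : ∀ ξ ∉ boxCone 2 2, f ξ = 0) (m : ℕ) (ht : t ≠ 0) :
    bergWeight (4 * m + 1) t * ‖sliceIntegral (fun ξ ↦ (boxSymbol ξ : ℂ) ^ m * f ξ) t‖ₑ ^ 2
      ≤ ENNReal.ofReal (restrictionConst m) * ∫⁻ η, ‖f (axisEquiv 2 (t, η))‖ₑ ^ 2 := by
  rcases ht.lt_or_gt with ht | ht
  · have hzero (η : Fin 2 → ℝ) : f (axisEquiv 2 (t, η)) = 0 := hsupp _ fun hη ↦ by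
      simpa [axisEquiv_zero, ht.not_ge] using zero_le_of_mem_boxCone two_pos hη
    simp [sliceIntegral, hzero]
  · have hweight := bergWeight_natCast (4 * m + 1) ht
    push_cast at hweight
    rw [hweight]
    refine (mul_le_mul_right
      (enorm_sq_sliceIntegral_boxSymbol_pow_mul_le hf hsupp m ht) _).trans_eq ?_
    rw [← mul_assoc, ← ENNReal.ofReal_mul (by positivity), restrictionConst]
    congr 2
    field_simp

theorem lintegral_bergWeight_sliceIntegral_le (hf : Measurable f)
    (hsupp : ∀ ξ ∉ boxCone 2 2, f ξ = 0) (m : ℕ) :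
    ∫⁻ t, bergWeight (4 * m + 1) t
        * ‖sliceIntegral (fun ξ ↦ (boxSymbol ξ : ℂ) ^ m * f ξ) t‖ₑ ^ 2
      ≤ ENNReal.ofReal (restrictionConst m) * ∫⁻ ξ, ‖f ξ‖ₑ ^ 2 := by
  rw [lintegral_axisEquiv (hf.enorm.pow_const 2),
    ← lintegral_const_mul' _ _ ENNReal.ofReal_ne_top]
  refine lintegral_mono_ae ?_
  filter_upwards [Measure.ae_ne volume 0] with t ht
  exact bergWeight_mul_enorm_sq_sliceIntegral_le hf hsupp m ht

section BoxTrace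

variable {F : (Fin 3 → ℂ) → ℂ} {U : Set (Fin 3 → ℂ)}

theorem box_iterate_axisPoint_eq_fourierInv (hr : 0 < r) (hU : IsOpen U)
    (hUK : MapsTo imVec U (strictDual (boxCone 2 r))) (hf : IsConeAmplitude (boxCone 2 r) f)
    (hF : EqOn F (fourierLaplace f) U) (m : ℕ) (hzU : axisPoint 2 z ∈ U) (hz : z ∈ UHP) :
    Box^[m] F (axisPoint 2 z)
      = 𝓕⁻ (expTwist (sliceIntegral fun ξ ↦ (boxSymbol ξ : ℂ) ^ m * f ξ) z.im) z.re := by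
  rw [box_iterate_eqOn_fourierLaplace hU hUK hf hF m hzU,
    (hf.boxSymbol_pow_mul m).fourierLaplace_axisPoint hr hz]

theorem differentiableOn_box_iterate_axisPoint (hr : 0 < r) (hU : IsOpen U)
    (hUK : MapsTo imVec U (strictDual (boxCone 2 r))) (hf : IsConeAmplitude (boxCone 2 r) f)
    (hF : EqOn F (fourierLaplace f) U) (m : ℕ) (hzU : ∀ z ∈ UHP, axisPoint 2 z ∈ U) :
    DifferentiableOn ℂ (fun z ↦ Box^[m] F (axisPoint 2 z)) UHP :=
  ((hf.boxSymbol_pow_mul m).differentiableOn_fourierLaplace_axisPoint hr).congr fun z hz ↦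
    box_iterate_eqOn_fourierLaplace hU hUK hf hF m (hzU z hz)

end BoxTrace

theorem box_iterate_axisPoint_bergman {F : (Fin 3 → ℂ) → ℂ} (hF : DifferentiableOn ℂ F TLambda3)
    (hfin : hardyNormSq F < ⊤) (m : ℕ) :
    DifferentiableOn ℂ (fun z ↦ Box^[m] F (axisPoint 2 z)) UHP ∧
      bergNormSqUHP (4 * m + 1) (fun z ↦ Box^[m] F (axisPoint 2 z))
        ≤ ENNReal.ofReal (restrictionConst m) * hardyNormSq F := by
  obtain ⟨f, hf, hsupp, hcone, hnorm, hFf⟩ := exists_amplitude_of_hardyNormSq_lt_top hF hfin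
  have hU : IsOpen (imVec ⁻¹' (lorentzCone ∩ strictDual (boxCone 2 2))) :=
    (isOpen_lorentzCone.inter (isOpen_strictDual _)).preimage continuous_imVec
  have hzU : ∀ z ∈ UHP, axisPoint 2 z ∈ imVec ⁻¹' (lorentzCone ∩ strictDual (boxCone 2 2)) :=
    fun z hz ↦ ⟨axisPoint_mem_preimage_lorentzCone hz, imVec_axisPoint_mem_strictDual two_pos hz⟩
  have hdiff : DifferentiableOn ℂ (fun z ↦ Box^[m] F (axisPoint 2 z)) UHP :=
    differentiableOn_box_iterate_axisPoint two_pos hU (fun w hw ↦ hw.2) hcone hFf m hzU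
  refine ⟨hdiff, ?_⟩
  calc _ ≤ ∫⁻ t, bergWeight (4 * m + 1) t
        * ‖sliceIntegral (fun ξ ↦ (boxSymbol ξ : ℂ) ^ m * f ξ) t‖ₑ ^ 2 :=
        bergNormSqUHP_le_of_eqOn_fourierInv hdiff.continuousOn
          (measurable_sliceIntegral (measurable_boxSymbol_pow_mul hf m))
          (fun y hy ↦ (hcone.boxSymbol_pow_mul m).integrable_expTwist_sliceIntegral two_pos
            (z := ⟨0, y⟩) hy)
          fun z hz ↦ box_iterate_axisPoint_eq_fourierInv two_pos hU (fun w hw ↦ hw.2) hcone hFf m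
            (hzU z hz) hz
    _ ≤ ENNReal.ofReal (restrictionConst m) * ∫⁻ ξ, ‖f ξ‖ₑ ^ 2 :=
        lintegral_bergWeight_sliceIntegral_le hf hsupp m
    _ ≤ _ := mul_le_mul_right hnorm _

end Restriction

section Lifting

variable {m : ℕ} {g : ℝ → ℂ} {t : ℝ}

/-- An amplitude supported in `boxCone 2 (1 / 2)` and constant on its sections after multiplication
by `boxSymbol ξ ^ m`. The section at height `t` has area `t ^ 2`, which makes `g t` the integral
over it. -/
def liftAmplitude (m : ℕ) (g : ℝ → ℂ) : EuclideanSpace ℝ (Fin 3) → ℂ :=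
  (boxCone 2 (1 / 2)).indicator fun ξ ↦ g (ξ 0) / ((boxSymbol ξ : ℂ) ^ m * (ξ 0 : ℂ) ^ 2)

theorem measurable_liftAmplitude (m : ℕ) (hg : Measurable g) : Measurable (liftAmplitude m g) := by
  have hbox := continuous_boxSymbol.measurable
  refine Measurable.indicator ?_ (measurableSet_boxCone _)
  fun_prop

theorem liftAmplitude_axisEquiv (m : ℕ) (g : ℝ → ℂ) (t : ℝ) (η : Fin 2 → ℝ) :
    liftAmplitude m g (axisEquiv 2 (t, η)) = (Metric.closedBall 0 (1 / 2 * t)).indicator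
      (fun η ↦ g t / ((boxSymbol (axisEquiv 2 (t, η)) : ℂ) ^ m * (t : ℂ) ^ 2)) η := by
  classical
  simp only [liftAmplitude, indicator_apply, axisEquiv_mem_boxCone, axisEquiv_zero]

theorem le_boxSymbol {ξ : EuclideanSpace ℝ (Fin 3)} (hξ : ξ ∈ boxCone 2 (1 / 2)) :
    2 * Real.pi ^ 2 * ξ 0 ^ 2 ≤ boxSymbol ξ := by
  have h₁ : |ξ 1| ≤ 1 / 2 * ξ 0 := abs_succ_le_of_mem_boxCone hξ 0
  have h₂ : |ξ 2| ≤ 1 / 2 * ξ 0 := abs_succ_le_of_mem_boxCone hξ 1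
  have hΔ : 1 / 2 * ξ 0 ^ 2 ≤ DeltaL ξ := by
    rw [DeltaL]
    nlinarith [sq_le_sq' (abs_le.1 h₁).1 (abs_le.1 h₁).2,
      sq_le_sq' (abs_le.1 h₂).1 (abs_le.1 h₂).2]
  rw [boxSymbol]
  linarith [mul_le_mul_of_nonneg_left hΔ (show 0 ≤ 4 * Real.pi ^ 2 by positivity)]

theorem le_boxSymbol_axisEquiv {η : Fin 2 → ℝ} (hη : η ∈ Metric.closedBall 0 (1 / 2 * t)) :
    2 * Real.pi ^ 2 * t ^ 2 ≤ boxSymbol (axisEquiv 2 (t, η)) := by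
  simpa only [axisEquiv_zero] using le_boxSymbol (axisEquiv_mem_boxCone.2 hη)

theorem volume_section (ht : 0 < t) :
    volume (Metric.closedBall (0 : Fin 2 → ℝ) (1 / 2 * t)) = ENNReal.ofReal (t ^ 2) := by
  rw [Real.volume_pi_closedBall _ (by positivity), Fintype.card_fin]
  ring_nf

theorem boxSymbol_pow_mul_liftAmplitude (m : ℕ) (g : ℝ → ℂ) (ht : 0 < t) (η : Fin 2 → ℝ) :
    (boxSymbol (axisEquiv 2 (t, η)) : ℂ) ^ m * liftAmplitude m g (axisEquiv 2 (t, η))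
      = (Metric.closedBall 0 (1 / 2 * t)).indicator (fun _ ↦ g t / (t : ℂ) ^ 2) η := by
  rw [liftAmplitude_axisEquiv]
  by_cases hη : η ∈ Metric.closedBall 0 (1 / 2 * t)
  · have hbox : 0 < boxSymbol (axisEquiv 2 (t, η)) :=
      lt_of_lt_of_le (by positivity) (le_boxSymbol_axisEquiv hη)
    have hbox_ne : (boxSymbol (axisEquiv 2 (t, η)) : ℂ) ≠ 0 := by exact_mod_cast hbox.ne'
    rw [indicator_of_mem hη, indicator_of_mem hη]
    field_simp
  · rw [indicator_of_notMem hη, indicator_of_notMem hη, mul_zero]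

theorem sliceIntegral_boxSymbol_pow_mul_liftAmplitude (m : ℕ) (hg : ∀ t ≤ 0, g t = 0) :
    (sliceIntegral fun ξ ↦ (boxSymbol ξ : ℂ) ^ m * liftAmplitude m g ξ) = g := by
  ext t
  rcases le_or_gt t 0 with ht | ht
  · simp [sliceIntegral, liftAmplitude_axisEquiv, hg t ht]
  · have ht' : (t : ℂ) ≠ 0 := by exact_mod_cast ht.ne'
    simp only [sliceIntegral, boxSymbol_pow_mul_liftAmplitude m g ht]
    rw [integral_indicator_const _ Metric.isClosed_closedBall.measurableSet, measureReal_def,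
      volume_section ht, ENNReal.toReal_ofReal (by positivity), Complex.real_smul]
    push_cast
    field_simp

theorem enorm_sq_liftAmplitude_le (m : ℕ) (g : ℝ → ℂ) (ht : 0 < t) (η : Fin 2 → ℝ) :
    ‖liftAmplitude m g (axisEquiv 2 (t, η))‖ₑ ^ 2
      ≤ (Metric.closedBall 0 (1 / 2 * t)).indicator (fun _ ↦
          ENNReal.ofReal (1 / ((2 * Real.pi ^ 2) ^ (2 * m) * t ^ (4 * m + 4))) * ‖g t‖ₑ ^ 2) η := by
  rw [liftAmplitude_axisEquiv]
  by_cases hη : η ∈ Metric.closedBall 0 (1 / 2 * t)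
  · have hbox := le_boxSymbol_axisEquiv hη
    rw [indicator_of_mem hη, indicator_of_mem hη, ← ofReal_norm, ← ofReal_norm,
      ← ENNReal.ofReal_pow (norm_nonneg _), ← ENNReal.ofReal_pow (norm_nonneg _),
      ← ENNReal.ofReal_mul (by positivity)]
    refine ENNReal.ofReal_le_ofReal ?_
    rw [norm_div, norm_mul, norm_pow, norm_pow, Complex.norm_real, Complex.norm_real,
      Real.norm_of_nonneg ht.le, Real.norm_of_nonneg (le_trans (by positivity) hbox)]
    calc _ ≤ (‖g t‖ / ((2 * Real.pi ^ 2 * t ^ 2) ^ m * t ^ 2)) ^ 2 :=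
          pow_le_pow_left₀ (div_nonneg (norm_nonneg _) (mul_nonneg (pow_nonneg
            (le_trans (by positivity) hbox) _) (by positivity))) (by gcongr) 2
      _ = _ := by
        rw [div_pow, one_div_mul_eq_div]
        ring_nf
  · simp only [indicator_of_notMem hη, enorm_zero, ne_eq, OfNat.ofNat_ne_zero, not_false_eq_true,
      zero_pow, le_refl]

/-- A bound for the squared operator norm of the right inverse
`G ↦ fourierLaplace (liftAmplitude m g)` of the restriction, where `G` has amplitude `g`. -/
def liftConst (m : ℕ) : ℝ :=
  (4 * Real.pi) ^ (4 * m + 2) / ((4 * m + 1).factorial * (2 * Real.pi ^ 2) ^ (2 * m))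

theorem liftConst_pos (m : ℕ) : 0 < liftConst m := by
  unfold liftConst
  positivity

theorem lintegral_enorm_sq_liftAmplitude_section_le (m : ℕ) (hg : ∀ t ≤ 0, g t = 0) (t : ℝ) :
    ∫⁻ η, ‖liftAmplitude m g (axisEquiv 2 (t, η))‖ₑ ^ 2
      ≤ ENNReal.ofReal (liftConst m) * (bergWeight (4 * m + 1) t * ‖g t‖ₑ ^ 2) := by
  rcases le_or_gt t 0 with ht | ht
  · simp [liftAmplitude_axisEquiv, hg t ht]
  · have hweight := bergWeight_natCast (4 * m + 1) ht
    push_cast at hweight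
    calc _ ≤ ∫⁻ η, (Metric.closedBall 0 (1 / 2 * t)).indicator (fun _ ↦
          ENNReal.ofReal (1 / ((2 * Real.pi ^ 2) ^ (2 * m) * t ^ (4 * m + 4))) * ‖g t‖ₑ ^ 2) η :=
          lintegral_mono fun η ↦ enorm_sq_liftAmplitude_le m g ht η
      _ = ENNReal.ofReal (1 / ((2 * Real.pi ^ 2) ^ (2 * m) * t ^ (4 * m + 4)) * t ^ 2)
          * ‖g t‖ₑ ^ 2 := by
          rw [lintegral_indicator_const Metric.isClosed_closedBall.measurableSet, volume_section ht,
            mul_right_comm, ← ENNReal.ofReal_mul (by positivity)]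
      _ = _ := by
          rw [hweight, ← mul_assoc, ← ENNReal.ofReal_mul (by unfold liftConst; positivity),
            liftConst, pow_add t (4 * m + 2) 2]
          congr 2
          field_simp

theorem lintegral_enorm_sq_liftAmplitude_le (m : ℕ) (hgm : Measurable g)
    (hg : ∀ t ≤ 0, g t = 0) : ∫⁻ ξ, ‖liftAmplitude m g ξ‖ₑ ^ 2
      ≤ ENNReal.ofReal (liftConst m) * ∫⁻ t, bergWeight (4 * m + 1) t * ‖g t‖ₑ ^ 2 := by
  rw [lintegral_axisEquiv ((measurable_liftAmplitude m hgm).enorm.pow_const 2),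
    ← lintegral_const_mul' _ _ ENNReal.ofReal_ne_top]
  exact lintegral_mono (lintegral_enorm_sq_liftAmplitude_section_le m hg)

theorem lorentzCone_subset_strictDual : lorentzCone ⊆ strictDual (boxCone 2 (1 / 2)) := by
  intro y hy
  rw [mem_lorentzCone] at hy
  refine mem_strictDual_boxCone one_half_pos ?_
  rw [Fin.sum_univ_two]
  refine lt_of_pow_lt_pow_left₀ 2 hy.1.le (lt_of_le_of_lt ?_ hy.2)
  change (1 / 2 * (|y 1| + |y 2|)) ^ 2 ≤ _
  nlinarith [sq_abs (y 1), sq_abs (y 2), sq_nonneg (|y 1| - |y 2|)]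

theorem hardyNormSq_fourierLaplace_le {K : Set (EuclideanSpace ℝ (Fin 3))}
    {f : EuclideanSpace ℝ (Fin 3) → ℂ} (hf : IsConeAmplitude K f)
    (hK : lorentzCone ⊆ strictDual K) : hardyNormSq (fourierLaplace f) ≤ ∫⁻ ξ, ‖f ξ‖ₑ ^ 2 := by
  rw [hardyNormSq_eq_iSup]
  refine iSup₂_le fun y hy ↦ ?_
  simp only [fourierLaplace_eq_fourierInv, imVec_tubePoint, reVec_tubePoint]
  refine (lintegral_enorm_sq_fourierInv_le (hf.integrable_expTwist (hK hy))).trans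
    (lintegral_mono_ae ?_)
  obtain ⟨c, hc, hcy⟩ := hK hy
  filter_upwards [hf.ae_eq_zero] with ξ hξ
  by_cases hξK : ξ ∈ K
  · have hpos : 0 ≤ ⟪y, ξ⟫ := le_trans (by positivity) (hcy ξ hξK)
    rw [enorm_sq_expTwist]
    refine mul_le_of_le_one_left' (ENNReal.ofReal_le_one.2 (Real.exp_le_one_iff.2 ?_))
    nlinarith [Real.pi_pos]
  · simp [expTwist, hξ hξK]

theorem eqOn_UHP_of_ae {G H : ℂ → ℂ} (hG : ContinuousOn G UHP) (hH : ContinuousOn H UHP)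
    (h : ∀ᵐ y : ℝ, 0 < y → ∀ x : ℝ, H (x + y * Complex.I) = G (x + y * Complex.I)) :
    EqOn H G UHP := by
  intro z hz
  have hmaps : MapsTo (fun y : ℝ ↦ (z.re + y * Complex.I : ℂ)) (Ioi 0) UHP := fun y hy ↦ by
    simpa [UHP] using hy
  have hcont : Continuous fun y : ℝ ↦ (z.re + y * Complex.I : ℂ) := by fun_prop
  have heq := Measure.eqOn_open_of_ae_eq
    ((ae_restrict_iff' measurableSet_Ioi).2 (h.mono fun y hy hpos ↦ hy hpos z.re)) isOpen_Ioi
    (hH.comp hcont.continuousOn hmaps) (hG.comp hcont.continuousOn hmaps) hz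
  simpa only [Function.comp_apply, Complex.re_add_im] using heq

theorem exists_hardy_lift {G : ℂ → ℂ} (hG : DifferentiableOn ℂ G UHP) (m : ℕ)
    (hfin : bergNormSqUHP (4 * m + 1) G < ⊤) :
    ∃ F : (Fin 3 → ℂ) → ℂ, DifferentiableOn ℂ F TLambda3 ∧
      hardyNormSq F ≤ ENNReal.ofReal (liftConst m) * bergNormSqUHP (4 * m + 1) G ∧
      ∀ z ∈ UHP, Box^[m] F (axisPoint 2 z) = G z := by
  obtain ⟨g, hgm, hg, hamp, hnorm⟩ := exists_amplitude_of_bergNormSqUHP_lt_top hG hfin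
  set f := liftAmplitude m g
  have hfnorm : ∫⁻ ξ, ‖f ξ‖ₑ ^ 2
      ≤ ENNReal.ofReal (liftConst m) * bergNormSqUHP (4 * m + 1) G :=
    hnorm ▸ lintegral_enorm_sq_liftAmplitude_le m hgm hg
  have hfcone : IsConeAmplitude (boxCone 2 (1 / 2)) f := .of_memLp
    ((memLp_two_iff_lintegral (measurable_liftAmplitude m hgm).aestronglyMeasurable).2
      (hfnorm.trans_lt (ENNReal.mul_lt_top ENNReal.ofReal_lt_top hfin)))
    (ae_of_all _ fun ξ hξ ↦ indicator_of_notMem hξ _)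
  have hU : IsOpen (imVec ⁻¹' strictDual (boxCone 2 (1 / 2))) :=
    (isOpen_strictDual _).preimage continuous_imVec
  have hslice := sliceIntegral_boxSymbol_pow_mul_liftAmplitude m hg
  have htrace : ∀ z ∈ UHP, Box^[m] (fourierLaplace f) (axisPoint 2 z)
      = 𝓕⁻ (expTwist g z.im) z.re := fun z hz ↦ by
    rw [box_iterate_axisPoint_eq_fourierInv one_half_pos hU (mapsTo_preimage _ _) hfcone
      (fun _ _ ↦ rfl) m (imVec_axisPoint_mem_strictDual one_half_pos hz) hz, hslice]
  have hcont : ContinuousOn (fun z ↦ Box^[m] (fourierLaplace f) (axisPoint 2 z)) UHP :=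
    (differentiableOn_box_iterate_axisPoint one_half_pos hU (mapsTo_preimage _ _) hfcone
      (fun _ _ ↦ rfl) m fun z hz ↦ imVec_axisPoint_mem_strictDual one_half_pos hz).continuousOn
  refine ⟨fourierLaplace f, fun z hz ↦ ((hfcone.hasFDerivAt_fourierLaplace
      (lorentzCone_subset_strictDual hz)).differentiableAt).differentiableWithinAt,
    (hardyNormSq_fourierLaplace_le hfcone lorentzCone_subset_strictDual).trans hfnorm,
    eqOn_UHP_of_ae hG.continuousOn hcont (hamp.mono fun y hy hpos x ↦ ?_)⟩
  have hint : Integrable (expTwist g y) := hslice ▸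
    (hfcone.boxSymbol_pow_mul m).integrable_expTwist_sliceIntegral one_half_pos (z := ⟨0, y⟩) hpos
  have hGx := (hy hpos).eq_fourierInv hint
    ((holomorphicOnTube_halfPlane hG).continuous_left hpos) x
  rw [htrace _ (by simpa [UHP] using hpos), hGx]
  simp

end Lifting

/-- for a positive measure `μ` on `Π⁺`, `μ(z₁) ⊗ δ_O(z₂,z₃)` is an
`m`-box Carleson measure for `H²(T_{Λ₃})` iff `μ` is a Carleson measure for the
weighted Bergman space `A²_{4m+1}(Π⁺)`. -/
theorem dirac_box_carleson_iff_bergman_carleson (m : ℕ) (μ : Measure ℂ) :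
    (∃ C : ℝ, 0 < C ∧ ∀ F : (Fin 3 → ℂ) → ℂ,
        DifferentiableOn ℂ F TLambda3 → hardyNormSq F < ⊤ →
        (∫⁻ z in UHP, (‖Box^[m] F ![z, 0, 0]‖₊ : ℝ≥0∞) ^ 2 ∂μ)
          ≤ ENNReal.ofReal C * hardyNormSq F)
    ↔ (∃ C' : ℝ, 0 < C' ∧ ∀ G : ℂ → ℂ,
        DifferentiableOn ℂ G UHP → bergNormSqUHP (4 * m + 1) G < ⊤ →
        (∫⁻ z in UHP, (‖G z‖₊ : ℝ≥0∞) ^ 2 ∂μ)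
          ≤ ENNReal.ofReal C' * bergNormSqUHP (4 * m + 1) G) := by
  simp only [vec_eq_axisPoint]
  constructor
  · rintro ⟨C, hC, hcarleson⟩
    refine ⟨C * liftConst m, mul_pos hC (liftConst_pos m), fun G hG hfin ↦ ?_⟩
    obtain ⟨F, hF, hFG, htrace⟩ := exists_hardy_lift hG m hfin
    calc _ = ∫⁻ z in UHP, (‖Box^[m] F (axisPoint 2 z)‖₊ : ℝ≥0∞) ^ 2 ∂μ :=
          setLIntegral_congr_fun isOpen_UHP.measurableSet fun z hz ↦ by rw [htrace z hz]
      _ ≤ ENNReal.ofReal C * hardyNormSq F :=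
          hcarleson F hF (hFG.trans_lt (ENNReal.mul_lt_top ENNReal.ofReal_lt_top hfin))
      _ ≤ _ := by
          rw [ENNReal.ofReal_mul hC.le, mul_assoc]
          exact mul_le_mul_right hFG _
  · rintro ⟨C, hC, hcarleson⟩
    refine ⟨C * restrictionConst m, mul_pos hC (restrictionConst_pos m), fun F hF hfin ↦ ?_⟩
    obtain ⟨hdiff, hbound⟩ := box_iterate_axisPoint_bergman hF hfin m
    refine (hcarleson _ hdiff
      (hbound.trans_lt (ENNReal.mul_lt_top ENNReal.ofReal_lt_top hfin))).trans ?_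
    rw [ENNReal.ofReal_mul hC.le, mul_assoc]
    exact mul_le_mul_right hbound _
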